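/- Let P ⊆ ℝ^d be a d-dimensional simplicial reflexive polytope with d ≥ 3 and exactly 3d−1 vertices, and suppose ν_P is a vertex of P. Then either d is even and P splits into (d−2)/2 copies of V2 and one copy of the pentagon Ṽ2, or d is odd and P splits into (d−3)/2 copies of V2 and one copy of the 3-polytope Q3'. -/

import Mathlib

noncomputable section

/-- The standard inner product on `ℝ^d`. -/
def dotp {d : ℕ} (x y : Fin d → ℝ) : ℝ := ∑ i, x i * y i

/-- `x` is a point of the lattice `ℤ^d`. -/
def IsLP {d : ℕ} (x : Fin d → ℝ) : Prop := ∀ i, ∃ n : ℤ, x i = (n : ℝ)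

/-- A lattice polytope: convex hull of finitely many lattice points. -/
def IsLatticePolytope {d : ℕ} (P : Set (Fin d → ℝ)) : Prop :=
  ∃ V : Finset (Fin d → ℝ), (∀ v ∈ V, IsLP v) ∧ P = convexHull ℝ (V : Set (Fin d → ℝ))

/-- The dual polytope `P* = {x | ⟨x,y⟩ ≤ 1 ∀ y ∈ P}`. -/
def dualPolytope {d : ℕ} (P : Set (Fin d → ℝ)) : Set (Fin d → ℝ) :=
  {x | ∀ y ∈ P, dotp x y ≤ 1}

/-- `P` is a reflexive polytope: a (`d`-dimensional) lattice polytope with `0` in its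
interior whose dual is again a lattice polytope. -/
def IsReflexive {d : ℕ} (P : Set (Fin d → ℝ)) : Prop :=
  IsLatticePolytope P ∧ (0 : Fin d → ℝ) ∈ interior P ∧ IsLatticePolytope (dualPolytope P)

/-- `F` is a facet of `P` with (uniquely determined) outer normal `u`, normalized by
`⟨u, F⟩ = 1` (possible since `0` is in the interior of `P`). -/
def IsFacetNormal {d : ℕ} (P F : Set (Fin d → ℝ)) (u : Fin d → ℝ) : Prop :=
  F.Nonempty ∧ (∀ y ∈ P, dotp u y ≤ 1) ∧ F = {y ∈ P | dotp u y = 1} ∧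
    Module.finrank ℝ (vectorSpan ℝ F) = d - 1

/-- `F` is a facet of `P`. -/
def IsFacet {d : ℕ} (P F : Set (Fin d → ℝ)) : Prop := ∃ u, IsFacetNormal P F u

/-- `P` is simplicial: every facet has exactly `d` vertices. -/
def IsSimplicial {d : ℕ} (P : Set (Fin d → ℝ)) : Prop :=
  ∀ F, IsFacet P F → (Set.extremePoints ℝ F).ncard = d

/-- Vertices of the hexagon `V₂`. -/
def V2v : Set (Fin 2 → ℤ) := {![1,0], ![0,1], ![1,1], ![-1,0], ![0,-1], ![-1,-1]}

/-- Vertices of the pentagon `Ṽ₂`. -/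
def tV2v : Set (Fin 2 → ℤ) := {![1,0], ![0,1], ![1,1], ![-1,0], ![0,-1]}

/-- Vertices of the pentagon `E₁`. -/
def E1v : Set (Fin 2 → ℤ) := {![1,0], ![-1,2], ![-1,1], ![0,-1], ![1,-1]}

/-- Vertices of the pentagon `E₂`. -/
def E2v : Set (Fin 2 → ℤ) := {![1,0], ![0,1], ![-1,1], ![-1,-1], ![1,-1]}

/-- Vertices of the 3-polytope `Q₃`. -/
def Q3v : Set (Fin 3 → ℤ) :=
  {![1,0,0], ![-1,0,0], ![0,1,0], ![0,-1,0], ![1,1,0], ![-1,-1,0], ![0,0,1], ![0,0,-1]}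

/-- Vertices of the 3-polytope `Q₃'`. -/
def Q3'v : Set (Fin 3 → ℤ) :=
  {![1,0,0], ![-1,0,0], ![0,1,0], ![0,-1,0], ![1,1,0], ![-1,-1,0], ![0,0,1], ![1,0,-1]}

/-- Embed `ℤ²` into coordinates `o, o+1` of `ℝ^d`. -/
def embed2 (d o : ℕ) (v : Fin 2 → ℤ) : Fin d → ℝ :=
  fun i => if (i : ℕ) = o then (v 0 : ℝ) else if (i : ℕ) = o + 1 then (v 1 : ℝ) else 0

/-- Embed `ℤ³` into coordinates `0, 1, 2` of `ℝ^d`. -/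
def embed3 (d : ℕ) (v : Fin 3 → ℤ) : Fin d → ℝ :=
  fun i => if (i : ℕ) = 0 then (v 0 : ℝ) else if (i : ℕ) = 1 then (v 1 : ℝ)
    else if (i : ℕ) = 2 then (v 2 : ℝ) else 0

/-- Standard model of a polytope in `ℝ^d` that splits into a polygon with vertex set `Q`
(in coordinates `0,1`) and `(d-2)/2` copies of `V₂` (in the remaining coordinate pairs). -/
def splitModel2 (d : ℕ) (Q : Set (Fin 2 → ℤ)) : Set (Fin d → ℝ) :=
  convexHull ℝ (embed2 d 0 '' Q ∪ ⋃ j ∈ Finset.range ((d - 2) / 2), embed2 d (2 * j + 2) '' V2v)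

/-- Standard model of a polytope in `ℝ^d` that splits into a 3-polytope with vertex set `Q`
(in coordinates `0,1,2`) and `(d-3)/2` copies of `V₂` (in the remaining coordinate pairs). -/
def splitModel3 (d : ℕ) (Q : Set (Fin 3 → ℤ)) : Set (Fin d → ℝ) :=
  convexHull ℝ (embed3 d '' Q ∪ ⋃ j ∈ Finset.range ((d - 3) / 2), embed2 d (2 * j + 3) '' V2v)

/-- Standard model of a polytope in `ℝ^d` that splits into `d/2` copies of `V₂`. -/
def splitModelV2 (d : ℕ) : Set (Fin d → ℝ) :=
  convexHull ℝ (⋃ j ∈ Finset.range (d / 2), embed2 d (2 * j) '' V2v)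

/-- `φ` is a unimodular transformation: a linear automorphism of `ℝ^d` mapping the lattice
`ℤ^d` onto itself. `P` splits into given polytopes iff some unimodular transformation maps `P`
onto the corresponding standard model. -/
def Unimodular {d : ℕ} (φ : (Fin d → ℝ) ≃ₗ[ℝ] (Fin d → ℝ)) : Prop :=
  ∀ x, IsLP x ↔ IsLP (φ x)

section

/-! ### Facets as bases -/

/-- A simplicial facet, given by its vertices `e` and the dual basis `c`. -/
structure FB {d : ℕ} (V : Finset (Fin d → ℝ)) (e : Fin d → (Fin d → ℝ))
    (c : Fin d → ((Fin d → ℝ) →ₗ[ℝ] ℝ)) : Prop where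
  mem : ∀ i, e i ∈ V
  bio : ∀ i j, c i (e j) = if i = j then 1 else 0
  exp : ∀ x, x = ∑ i, c i x • e i
  le : ∀ v ∈ V, ∑ i, c i v ≤ 1
  eq : ∀ v ∈ V, ∑ i, c i v = 1 → ∃ i, v = e i
  int : ∀ x, IsLP x → ∃ n : ℤ, ∑ i, c i x = n

/-- The properties of the vertex set of the polytope used in the combinatorial part. -/
structure Hyp {d : ℕ} (V : Finset (Fin d → ℝ)) : Prop where
  hd : 3 ≤ d
  lat : ∀ v ∈ V, IsLP v
  zero : (0 : Fin d → ℝ) ∉ V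
  fac : ∀ u : (Fin d → ℝ) →ₗ[ℝ] ℝ, (∀ v ∈ V, u v ≤ 1) →
    Submodule.span ℝ {v | v ∈ V ∧ u v = 1} = ⊤ →
    (V.filter (fun v => u v = 1)).card = d ∧ ∀ x, IsLP x → ∃ n : ℤ, u x = n
  neg : ∀ u : (Fin d → ℝ) →ₗ[ℝ] ℝ, u ≠ 0 → ∃ v ∈ V, u v < 0
  card : V.card = 3 * d - 1
  sum : (∑ v ∈ V, v) ∈ V
  ex : ∃ u : (Fin d → ℝ) →ₗ[ℝ] ℝ, (∀ v ∈ V, u v ≤ 1) ∧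
    Submodule.span ℝ {v | v ∈ V ∧ u v = 1} = ⊤ ∧ u (∑ v ∈ V, v) = 1

variable {d : ℕ} {V : Finset (Fin d → ℝ)} {e : Fin d → (Fin d → ℝ)}
    {c : Fin d → ((Fin d → ℝ) →ₗ[ℝ] ℝ)}

theorem bio_inj (bio : ∀ i j, c i (e j) = if i = j then 1 else 0) : Function.Injective e := by
  intro i j h
  have h1 := bio i j
  rw [← h, bio i i] at h1
  by_contra hne
  simp [hne] at h1

theorem mkFB (H : Hyp V) (mem : ∀ i, e i ∈ V)
    (bio : ∀ i j, c i (e j) = if i = j then 1 else 0)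
    (exp : ∀ x, x = ∑ i, c i x • e i)
    (le : ∀ v ∈ V, ∑ i, c i v ≤ 1) : FB V e c := by
  have hu : ∀ x, (∑ i, c i) x = ∑ i, c i x := fun x => by simp
  have h1 : ∀ j, (∑ i, c i) (e j) = 1 := by
    intro j; rw [hu]; simp [bio]
  obtain ⟨hc, hInt⟩ := H.fac (∑ i, c i) (by intro v hv; rw [hu]; exact le v hv) (by
    rw [eq_top_iff]
    intro x _
    rw [exp x]
    refine Submodule.sum_mem _ fun i _ => Submodule.smul_mem _ _ (Submodule.subset_span ?_)
    exact ⟨mem i, h1 i⟩)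
  refine ⟨mem, bio, exp, le, ?_, fun x hx => by simpa [hu] using hInt x hx⟩
  intro v hv hv1
  have hsub : Finset.univ.image e ⊆ V.filter (fun v => (∑ i, c i) v = 1) := by
    intro y hy
    obtain ⟨i, _, rfl⟩ := Finset.mem_image.1 hy
    exact Finset.mem_filter.2 ⟨mem i, h1 i⟩
  have heq := Finset.eq_of_subset_of_card_le hsub (by
    rw [hc, Finset.card_image_of_injective _ (bio_inj bio)]; simp)
  have : v ∈ Finset.univ.image e := by
    rw [heq]; exact Finset.mem_filter.2 ⟨hv, by rw [hu]; exact hv1⟩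
  obtain ⟨i, _, rfl⟩ := Finset.mem_image.1 this
  exact ⟨i, rfl⟩

theorem exists_FB (H : Hyp V) : ∃ e c, ∃ o : Fin d, FB V e c ∧ e o = ∑ v ∈ V, v := by
  obtain ⟨u, hle, hsp, hw⟩ := H.ex
  obtain ⟨hc, -⟩ := H.fac u hle hsp
  set T := V.filter (fun v => u v = 1) with hT
  let q : Fin d ≃ T := (Finset.equivFinOfCardEq hc).symm
  let e : Fin d → (Fin d → ℝ) := fun i => (q i : Fin d → ℝ)
  have hr : Set.range e = {v | v ∈ V ∧ u v = 1} := by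
    ext v; constructor
    · rintro ⟨i, rfl⟩
      exact Finset.mem_filter.1 (q i).2
    · intro hv
      have hv' : v ∈ T := by rw [hT, Finset.mem_filter]; exact hv
      exact ⟨q.symm ⟨v, hv'⟩, by simp [e]⟩
  have hm : ∀ i, e i ∈ V ∧ u (e i) = 1 := fun i => by
    have : e i ∈ Set.range e := ⟨i, rfl⟩
    rw [hr] at this; exact this
  let b : Module.Basis (Fin d) ℝ (Fin d → ℝ) :=
    basisOfTopLeSpanOfCardEqFinrank e (by rw [hr, hsp]) (by simp)
  have hb : ∀ i, b i = e i := fun i => by simp [b]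
  obtain ⟨o, ho⟩ : (∑ v ∈ V, v) ∈ Set.range e := by rw [hr]; exact ⟨H.sum, hw⟩
  have hexp : ∀ x, x = ∑ i, b.coord i x • e i := by
    intro x
    conv_lhs => rw [← b.sum_repr x]
    simp [hb]
  refine ⟨e, fun i => b.coord i, o, mkFB H (fun i => (hm i).1) ?_ hexp ?_, ho⟩
  · intro i j
    rw [← hb, Module.Basis.coord_apply, Module.Basis.repr_self, Finsupp.single_apply]
    simp [eq_comm]
  · intro v hv
    have h2 : u v = ∑ i, b.coord i v := by
      conv_lhs => rw [hexp v]
      rw [map_sum]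
      refine Finset.sum_congr rfl fun i _ => ?_
      rw [map_smul, (hm i).2]; simp
    rw [← h2]; exact hle v hv

/-- dual basis after a pivot step -/
def pivC (c : Fin d → ((Fin d → ℝ) →ₗ[ℝ] ℝ)) (i : Fin d) (n : Fin d → ℝ) :
    Fin d → ((Fin d → ℝ) →ₗ[ℝ] ℝ) :=
  fun j => if j = i then (c i n)⁻¹ • c i else c j - (c j n / c i n) • c i

theorem pivC_sum (i : Fin d) (n : Fin d → ℝ) (hn : c i n ≠ 0) (x : Fin d → ℝ) :
    ∑ j, pivC c i n j x = ∑ j, c j x - ((∑ j, c j n - 1) / c i n) * c i x := by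
  have h : ∀ j, pivC c i n j x = (c j x - (c j n / c i n) * c i x) +
      if j = i then (c i n)⁻¹ * c i x else 0 := by
    intro j
    unfold pivC
    split_ifs with hj
    · subst hj; simp; field_simp; ring
    · simp
  simp only [h, Finset.sum_add_distrib, Finset.sum_sub_distrib, Finset.sum_ite_eq',
    Finset.mem_univ, if_true, ← Finset.sum_mul, ← Finset.sum_div]
  field_simp
  ring

theorem FB.pivot (H : Hyp V) (h : FB V e c) (i : Fin d) :
    ∃ n ∈ V, ∃ t : ℕ, 1 ≤ t ∧ c i n < 0 ∧ ∑ j, c j n - t * c i n = 1 ∧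
      FB V (Function.update e i n) (pivC c i n) ∧
      (∀ x, ∑ j, pivC c i n j x = ∑ j, c j x - t * c i x) ∧
      (∀ x ∈ V, ∑ j, c j x = 0 → c i x < 0 → x = n) := by
  have hne : c i ≠ 0 := by
    intro h0
    have := h.bio i i
    simp [h0] at this
  obtain ⟨v0, hv0, hneg0⟩ := H.neg (c i) hne
  obtain ⟨n, hn, hmin⟩ := Finset.exists_min_image (V.filter (fun v => c i v < 0))
    (fun x => (1 - ∑ j, c j x) / (- c i x)) ⟨v0, Finset.mem_filter.2 ⟨hv0, hneg0⟩⟩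
  obtain ⟨hnV, hnn⟩ := Finset.mem_filter.1 hn
  have hn0 : c i n ≠ 0 := hnn.ne
  have hlt : ∑ j, c j n < 1 := by
    refine lt_of_le_of_ne (h.le n hnV) fun h1 => ?_
    obtain ⟨k, rfl⟩ := h.eq n hnV h1
    rw [h.bio] at hnn
    split_ifs at hnn <;> linarith
  set t : ℝ := (∑ j, c j n - 1) / c i n with ht
  have ht' : t = (1 - ∑ j, c j n) / (- c i n) := by
    rw [ht, div_neg, ← neg_div]; congr 1; ring
  have htpos : 0 < t := by rw [ht']; apply div_pos <;> linarith
  have hsum : ∀ x, ∑ j, pivC c i n j x = ∑ j, c j x - t * c i x := fun x => pivC_sum i n hn0 x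
  have hFB : FB V (Function.update e i n) (pivC c i n) := by
    apply mkFB H
    · intro j
      by_cases hj : j = i
      · subst hj; simpa using hnV
      · simpa [hj] using h.mem j
    · intro j k
      by_cases hj : j = i <;> by_cases hk : k = i
      · subst hj; subst hk; simp [pivC, hn0]
      · subst hj; simp [pivC, hk, Ne.symm hk, h.bio]
      · subst hk; simp [pivC, hj, hn0]
      · simp [pivC, hj, hk, h.bio, Ne.symm hk]
    · intro x
      have e1 : ∑ j, pivC c i n j x • Function.update e i n j
          = ∑ j, (c j x • e j + (-(c i x / c i n)) • (c j n • e j)) + (c i x / c i n) • n := by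
        have : (c i x / c i n) • n = ∑ j, if j = i then (c i x / c i n) • n else 0 := by simp
        rw [this, ← Finset.sum_add_distrib]
        refine Finset.sum_congr rfl fun j _ => ?_
        by_cases hj : j = i
        · subst hj
          simp [pivC, smul_smul, hn0]
          rw [show (c j n)⁻¹ * c j x = c j x / c j n by field_simp]
        · simp only [pivC, hj, if_false, Function.update_of_ne (h := hj), smul_smul,
            LinearMap.sub_apply, LinearMap.smul_apply, smul_eq_mul, sub_smul, add_zero, neg_mul,
            neg_smul, ← sub_eq_add_neg]
          congr 2; ring
      rw [e1, Finset.sum_add_distrib, ← Finset.smul_sum, ← h.exp x, ← h.exp n]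
      simp
    · intro v hv
      rw [hsum]
      rcases lt_or_ge (c i v) 0 with hv0 | hv0
      · have := hmin v (Finset.mem_filter.2 ⟨hv, hv0⟩)
        rw [← ht', le_div_iff₀ (by linarith)] at this
        linarith
      · have := h.le v hv
        nlinarith
  obtain ⟨m, hm⟩ := hFB.int (e i) (H.lat _ (h.mem i))
  have h1 : ∑ j, c j (e i) = 1 := by simp [h.bio]
  rw [hsum, h1, h.bio, if_pos rfl, mul_one] at hm
  obtain ⟨s, hs⟩ : ∃ s : ℕ, t = s := by
    have : (0:ℝ) < ((1 - m : ℤ) : ℝ) := by push_cast; linarith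
    have : 0 < 1 - m := by exact_mod_cast this
    refine ⟨(1 - m).toNat, ?_⟩
    have h3 : (((1 - m).toNat : ℤ) : ℝ) = ((1 - m : ℤ) : ℝ) := by
      rw [Int.toNat_of_nonneg this.le]
    have h4 : (((1 - m).toNat : ℤ) : ℝ) = ((1-m).toNat : ℝ) := by norm_cast
    rw [← h4, h3]; push_cast; linarith
  have hs1 : 1 ≤ s := by
    rcases Nat.eq_zero_or_pos s with h0 | h0
    · rw [h0] at hs; simp at hs; linarith
    · exact h0
  refine ⟨n, hnV, s, hs1, hnn, ?_, hFB, by rw [← hs]; exact hsum, ?_⟩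
  · rw [← hs, ht]; field_simp; ring
  · intro x hx h0 hneg
    have h5 := hFB.le x hx
    obtain ⟨k, hk⟩ := hFB.int x (H.lat x hx)
    have h6 := hsum x
    rw [h0] at h6
    have h7 : 0 < ∑ j, pivC c i n j x := by rw [h6]; nlinarith
    have h8 : ∑ j, pivC c i n j x = 1 := by
      rw [hk] at h5 h7 ⊢
      have a1 : k ≤ 1 := by exact_mod_cast h5
      have a2 : 0 < k := by exact_mod_cast h7
      have : k = 1 := by omega
      rw [this]; simp
    obtain ⟨l, hl⟩ := hFB.eq x hx h8
    by_cases hli : l = i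
    · subst hli; simpa using hl
    · rw [Function.update_of_ne hli] at hl
      rw [hl] at h0
      simp [h.bio] at h0


theorem FB.sum_e (h : FB V e c) (j : Fin d) : ∑ i, c i (e j) = 1 := by simp [h.bio]

theorem FB.levels (H : Hyp V) (h : FB V e c) {o : Fin d} (ho : e o = ∑ v ∈ V, v) :
    ∃ n : Fin d → (Fin d → ℝ), ∃ t : Fin d → ℕ,
      (∀ i, n i ∈ V) ∧ (∀ i, 1 ≤ t i) ∧ (∀ i, c i (n i) < 0) ∧ (∀ i, ∑ j, c j (n i) = 0) ∧
      (∀ i, (t i : ℝ) * c i (n i) = -1) ∧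
      (∀ i, FB V (Function.update e i (n i)) (pivC c i (n i))) ∧
      (∀ i x, ∑ j, pivC c i (n i) j x = ∑ j, c j x - t i * c i x) ∧
      (∀ i, ∀ x ∈ V, ∑ j, c j x = 0 → c i x < 0 → x = n i) ∧
      (∀ i j, j ≠ i → 0 ≤ c j (n i)) ∧
      (∀ x ∈ V, ∑ j, c j x = 1 ∨ (∑ j, c j x = 0 ∧ ∃ i, x = n i) ∨ ∑ j, c j x = -1) ∧
      (V.filter (fun x => ∑ j, c j x = -1)).card = d - 1 := by
  choose n hnV t ht hneg h1 hFB hs huniq using fun i => h.pivot H i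
  have hd := H.hd
  set L1 := V.filter (fun x => ∑ j, c j x = 1) with hL1
  set L0 := V.filter (fun x => ∑ j, c j x = 0) with hL0
  set R := V.filter (fun x => ∑ j, c j x ≤ -1) with hR
  have hL1c : L1.card = d := by
    have : L1 = Finset.univ.image e := by
      ext x; constructor
      · intro hx
        obtain ⟨hx, hx1⟩ := Finset.mem_filter.1 hx
        obtain ⟨i, rfl⟩ := h.eq x hx hx1
        exact Finset.mem_image_of_mem _ (Finset.mem_univ _)
      · intro hx
        obtain ⟨i, _, rfl⟩ := Finset.mem_image.1 hx
        exact Finset.mem_filter.2 ⟨h.mem i, h.sum_e i⟩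
    rw [this, Finset.card_image_of_injective _ (bio_inj h.bio)]; simp
  have hsub0 : L0 ⊆ Finset.univ.image n := by
    intro x hx
    obtain ⟨hx, hx0⟩ := Finset.mem_filter.1 hx
    have : ∃ i, c i x < 0 := by
      by_contra hcon
      push Not at hcon
      have hz : ∀ i ∈ Finset.univ, c i x = 0 :=
        (Finset.sum_eq_zero_iff_of_nonneg (fun i _ => hcon i)).1 hx0
      apply H.zero
      have : x = 0 := by
        rw [h.exp x]
        exact Finset.sum_eq_zero fun i hi => by rw [hz i hi, zero_smul]
      rwa [this] at hx
    obtain ⟨i, hi⟩ := this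
    rw [huniq i x hx hx0 hi]
    exact Finset.mem_image_of_mem _ (Finset.mem_univ _)
  have himc : (Finset.univ.image n).card ≤ d := by
    refine Finset.card_image_le.trans ?_; simp
  have hL0c : L0.card ≤ d := (Finset.card_le_card hsub0).trans himc
  have hcov : V = L1 ∪ (L0 ∪ R) := by
    ext x
    simp only [hL1, hL0, hR, Finset.mem_union, Finset.mem_filter]
    constructor
    · intro hx
      have hle := h.le x hx
      obtain ⟨k, hk⟩ := h.int x (H.lat x hx)
      rw [hk] at hle ⊢
      have hk1 : k ≤ 1 := by exact_mod_cast hle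
      have : k = 1 ∨ k = 0 ∨ k ≤ -1 := by omega
      rcases this with h' | h' | h'
      · left; exact ⟨hx, by rw [h']; simp⟩
      · right; left; exact ⟨hx, by rw [h']; simp⟩
      · right; right; exact ⟨hx, by exact_mod_cast h'⟩
    · rintro (h' | h' | h') <;> exact h'.1
  have hd1 : Disjoint L0 R := by
    rw [Finset.disjoint_left]; intro x hx hx'
    have a := (Finset.mem_filter.1 hx).2
    have b := (Finset.mem_filter.1 hx').2
    linarith
  have hd2 : Disjoint L1 (L0 ∪ R) := by
    rw [Finset.disjoint_left]; intro x hx hx'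
    have a := (Finset.mem_filter.1 hx).2
    rcases Finset.mem_union.1 hx' with hx' | hx'
    · have b := (Finset.mem_filter.1 hx').2
      linarith
    · have b := (Finset.mem_filter.1 hx').2
      linarith
  have hcard : d + (L0.card + R.card) = 3 * d - 1 := by
    rw [← H.card]
    conv_rhs => rw [hcov]
    rw [Finset.card_union_of_disjoint hd2, Finset.card_union_of_disjoint hd1, hL1c]
  have hsumV : ∑ x ∈ V, ∑ j, c j x = 1 := by
    rw [Finset.sum_comm]
    rw [← h.sum_e o, ho]
    exact Finset.sum_congr rfl fun j _ => (map_sum (c j) _ _).symm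
  have hsum1 : ∑ x ∈ L1, ∑ j, c j x = d := by
    rw [Finset.sum_congr rfl (fun x hx => (Finset.mem_filter.1 hx).2)]; rw [Finset.sum_const, hL1c]; simp
  have hsum0 : ∑ x ∈ L0, ∑ j, c j x = 0 := by
    rw [Finset.sum_congr rfl (fun x hx => (Finset.mem_filter.1 hx).2)]; simp
  have hsumR : ∑ x ∈ R, (- 1 - ∑ j, c j x) = d - 1 - R.card := by
    have : ∑ x ∈ V, ∑ j, c j x = d + (0 + ∑ x ∈ R, ∑ j, c j x) := by
      conv_lhs => rw [hcov]
      rw [Finset.sum_union hd2, Finset.sum_union hd1, hsum1, hsum0]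
    rw [Finset.sum_sub_distrib]
    simp
    linarith
  have hge : 0 ≤ ∑ x ∈ R, (- 1 - ∑ j, c j x) :=
    Finset.sum_nonneg fun x hx => by
      have := (Finset.mem_filter.1 hx).2
      linarith
  have hRle : R.card ≤ d - 1 := by
    rw [hsumR] at hge
    have : (R.card : ℝ) + 1 ≤ d := by linarith
    have : R.card + 1 ≤ d := by exact_mod_cast this
    omega
  have hRc : R.card = d - 1 := by omega
  have hL0d : L0.card = d := by omega
  have hRall : ∀ x ∈ R, ∑ j, c j x = -1 := by
    have hz : ∑ x ∈ R, (- 1 - ∑ j, c j x) = 0 := by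
      rw [hsumR, hRc, Nat.cast_sub (by omega)]; simp
    intro x hx
    have := (Finset.sum_eq_zero_iff_of_nonneg (fun x hx => by
      have := (Finset.mem_filter.1 hx).2
      linarith)).1 hz x hx
    linarith
  have hL0eq : L0 = Finset.univ.image n :=
    Finset.eq_of_subset_of_card_le hsub0 (by rw [hL0d]; exact himc)
  have hninj : Function.Injective n := by
    have : (Finset.univ.image n).card = (Finset.univ : Finset (Fin d)).card := by
      rw [← hL0eq, hL0d]; simp
    have := Finset.card_image_iff.1 this
    intro a b hab
    exact this (by simp) (by simp) hab
  have hn0 : ∀ i, ∑ j, c j (n i) = 0 := fun i => by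
    have : n i ∈ L0 := by rw [hL0eq]; exact Finset.mem_image_of_mem _ (Finset.mem_univ _)
    exact (Finset.mem_filter.1 this).2
  refine ⟨n, t, hnV, ht, hneg, hn0, ?_, hFB, hs, huniq, ?_, ?_, ?_⟩
  · intro i
    have := h1 i
    rw [hn0 i] at this
    linarith
  · intro i j hji
    by_contra hcon
    push Not at hcon
    exact hji (hninj (huniq j (n i) (hnV i) (hn0 i) hcon)).symm
  · intro x hx
    have hx' := hx
    rw [hcov] at hx'
    rcases Finset.mem_union.1 hx' with h' | h'
    · left; exact (Finset.mem_filter.1 h').2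
    rcases Finset.mem_union.1 h' with h' | h'
    · right; left
      refine ⟨(Finset.mem_filter.1 h').2, ?_⟩
      rw [hL0eq] at h'
      obtain ⟨i, _, rfl⟩ := Finset.mem_image.1 h'
      exact ⟨i, rfl⟩
    · right; right; exact hRall x h'
  · rw [← hRc]
    congr 1
    ext x
    simp only [hR, Finset.mem_filter]
    constructor
    · rintro ⟨a, b⟩; exact ⟨a, b.le⟩
    · rintro ⟨a, b⟩; exact ⟨a, hRall x (Finset.mem_filter.2 ⟨a, b⟩)⟩

/-- A facet through the distinguished vertex of minimal normalized volume. -/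
def Good (V : Finset (Fin d → ℝ)) (o : Fin d) (e : Fin d → (Fin d → ℝ))
    (c : Fin d → ((Fin d → ℝ) →ₗ[ℝ] ℝ)) : Prop :=
  FB V e c ∧ e o = ∑ v ∈ V, v ∧ ∀ e' c', FB V e' c' → e' o = ∑ v ∈ V, v →
    |(Matrix.of e).det| ≤ |(Matrix.of e').det|

theorem FB.det_ne (h : FB V e c) : (Matrix.of e).det ≠ 0 := by
  have hli : LinearIndependent ℝ e := by
    rw [Fintype.linearIndependent_iff]
    intro g hg i
    have := congrArg (c i) hg
    simpa [h.bio] using this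
  have : IsUnit (Matrix.of e) := Matrix.linearIndependent_rows_iff_isUnit.1 hli
  exact ((Matrix.isUnit_iff_isUnit_det _).1 this).ne_zero

theorem FB.det_update (h : FB V e c) (i : Fin d) (n : Fin d → ℝ) :
    (Matrix.of (Function.update e i n)).det = c i n * (Matrix.of e).det := by
  have := Matrix.det_updateRow_sum (Matrix.of e) i (fun k => c k n)
  rw [smul_eq_mul] at this
  rw [← this]
  congr 1
  conv_lhs => rw [h.exp n]
  rfl

theorem exists_good (H : Hyp V) : ∃ e c, ∃ o : Fin d, Good V o e c := by
  obtain ⟨e0, c0, o, h0, ho⟩ := exists_FB H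
  have hfin : {e : Fin d → (Fin d → ℝ) | (∃ c, FB V e c) ∧ e o = ∑ v ∈ V, v}.Finite := by
    refine (Set.Finite.subset (Fintype.piFinset (fun _ : Fin d => V)).finite_toSet ?_)
    rintro e ⟨⟨c, hc⟩, -⟩
    simpa using hc.mem
  obtain ⟨e, ⟨⟨c, hc⟩, heo⟩, hmin⟩ := Set.exists_min_image _
    (fun e : Fin d → (Fin d → ℝ) => |(Matrix.of e).det|) hfin ⟨e0, ⟨c0, h0⟩, ho⟩
  exact ⟨e, c, o, hc, heo, fun e' c' h' ho' => hmin e' ⟨⟨c', h'⟩, ho'⟩⟩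

theorem one_pos_of_sum (f : Fin d → ℝ) (j : Fin d) (hj : f j = -1) (hsum : ∑ i, f i = 0)
    (hnn : ∀ i, i ≠ j → 0 ≤ f i) (hInt : ∀ i, ∃ k : ℤ, f i = k) :
    ∃ k, k ≠ j ∧ f k = 1 ∧ ∀ i, i ≠ j → i ≠ k → f i = 0 := by
  have h1 : ∑ i ∈ Finset.univ.erase j, f i = 1 := by
    have := Finset.add_sum_erase Finset.univ f (Finset.mem_univ j)
    linarith
  have : ∃ k ∈ Finset.univ.erase j, f k ≠ 0 := by
    by_contra hcon
    push Not at hcon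
    rw [Finset.sum_eq_zero hcon] at h1
    norm_num at h1
  obtain ⟨k, hk, hk0⟩ := this
  have hkj := Finset.ne_of_mem_erase hk
  have h2 := Finset.add_sum_erase _ f hk
  have h3 : ∀ i ∈ (Finset.univ.erase j).erase k, 0 ≤ f i := fun i hi =>
    hnn i (Finset.ne_of_mem_erase (Finset.mem_of_mem_erase hi))
  have h4 := Finset.sum_nonneg h3
  have h5 : 1 ≤ f k := by
    obtain ⟨m, hm⟩ := hInt k
    have := hnn k hkj
    rw [hm] at this hk0 ⊢
    have a : 0 ≤ m := by exact_mod_cast this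
    have b : m ≠ 0 := by exact_mod_cast hk0
    have : 1 ≤ m := by omega
    exact_mod_cast this
  refine ⟨k, hkj, by linarith, ?_⟩
  intro i hij hik
  exact (Finset.sum_eq_zero_iff_of_nonneg h3).1 (by linarith) i (by simp [hij, hik])

structure Str (V : Finset (Fin d → ℝ)) (o : Fin d) (e : Fin d → (Fin d → ℝ))
    (c : Fin d → ((Fin d → ℝ) →ₗ[ℝ] ℝ)) (s : Fin d → Fin d) : Prop where
  ne : ∀ i, s i ≠ i
  nV : ∀ i, e (s i) - e i ∈ V
  uniq : ∀ i, ∀ x ∈ V, ∑ j, c j x = 0 → c i x < 0 → x = e (s i) - e i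
  tri : ∀ x ∈ V, ∑ j, c j x = 1 ∨ (∑ j, c j x = 0 ∧ ∃ i, x = e (s i) - e i) ∨ ∑ j, c j x = -1
  low : ∀ x ∈ V, ∑ j, c j x = -1 → ∀ i, i ≠ o → c i x = 0 ∨ c i x = -1
  card : (V.filter (fun x => ∑ j, c j x = -1)).card = d - 1
  good : ∀ i, i ≠ o → ∃ c', Good V o (Function.update e i (e (s i) - e i)) c' ∧
    ∀ x, ∑ j, c' j x = ∑ j, c j x - c i x
  ints : ∀ i, ∀ x, IsLP x → ∃ k : ℤ, c i x = k

theorem Good.str (H : Hyp V) {o : Fin d} (hg : Good V o e c) : ∃ s, Str V o e c s := by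
  obtain ⟨h, ho, hmin⟩ := hg
  obtain ⟨n, t, hnV, ht, hneg, hn0, htn, hFB, hs, huniq, hnn, htri, hcard⟩ := h.levels H ho
  have hup : ∀ i, i ≠ o → Function.update e i (n i) o = ∑ v ∈ V, v := fun i hi => by
    rw [Function.update_of_ne (Ne.symm hi), ho]
  have hdet := abs_pos.2 h.det_ne
  -- minimality forces determinant ratio one
  have hm1 : ∀ i, i ≠ o → c i (n i) = -1 ∧ (t i : ℝ) = 1 := by
    intro i hi
    have h1 := hmin _ _ (hFB i) (hup i hi)
    rw [h.det_update, abs_mul] at h1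
    have h2 : 1 ≤ |c i (n i)| := by
      by_contra hcon
      push Not at hcon
      nlinarith
    rw [abs_of_neg (hneg i)] at h2
    have h3 : (1 : ℝ) ≤ t i := by exact_mod_cast ht i
    have h4 := htn i
    have h5 : c i (n i) = -1 := by nlinarith
    refine ⟨h5, ?_⟩
    rw [h5] at h4; linarith
  have hs1 : ∀ i, i ≠ o → ∀ x, ∑ j, pivC c i (n i) j x = ∑ j, c j x - c i x := by
    intro i hi x
    rw [hs i x, (hm1 i hi).2, one_mul]
  have hgood : ∀ i, i ≠ o → Good V o (Function.update e i (n i)) (pivC c i (n i)) := by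
    intro i hi
    refine ⟨hFB i, hup i hi, ?_⟩
    intro e' c' h' ho'
    rw [h.det_update, (hm1 i hi).1, abs_mul]
    simpa using hmin e' c' h' ho'
  have hInt1 : ∀ i, i ≠ o → ∀ x, IsLP x → ∃ k : ℤ, c i x = k := by
    intro i hi x hx
    obtain ⟨a, ha⟩ := h.int x hx
    obtain ⟨b, hb⟩ := (hFB i).int x hx
    rw [hs1 i hi, ha] at hb
    refine ⟨a - b, ?_⟩
    push_cast; linarith
  have hInt : ∀ i, ∀ x, IsLP x → ∃ k : ℤ, c i x = k := by
    intro i x hx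
    by_cases hi : i = o
    · subst hi
      obtain ⟨a, ha⟩ := h.int x hx
      have h1 := Finset.add_sum_erase Finset.univ (fun j => c j x) (Finset.mem_univ i)
      have : ∀ j : Fin d, ∃ k : ℤ, j ≠ i → c j x = k := by
        intro j
        by_cases hj : j = i
        · exact ⟨0, fun h => absurd hj h⟩
        · obtain ⟨k, hk⟩ := hInt1 j hj x hx
          exact ⟨k, fun _ => hk⟩
      choose k hk using this
      have h2 : ∑ j ∈ Finset.univ.erase i, c j x = ((∑ j ∈ Finset.univ.erase i, k j : ℤ) : ℝ) := by
        push_cast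
        exact Finset.sum_congr rfl fun j hj => hk j (Finset.ne_of_mem_erase hj)
      refine ⟨a - ∑ j ∈ Finset.univ.erase i, k j, ?_⟩
      rw [Int.cast_sub, ← h2, ← ha, ← h1]; ring
    · exact hInt1 i hi x hx
  have hm : ∀ i, c i (n i) = -1 := by
    intro i
    obtain ⟨k, hk⟩ := hInt i (n i) (H.lat _ (hnV i))
    have h1 := hneg i
    have h2 := htn i
    have h3 : (1 : ℝ) ≤ t i := by exact_mod_cast ht i
    have h4 : c i (n i) ≤ -1 := by
      rw [hk] at h1 ⊢
      have : k < 0 := by exact_mod_cast h1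
      have : k ≤ -1 := by omega
      exact_mod_cast this
    nlinarith
  have hsig : ∀ i, ∃ k, k ≠ i ∧ n i = e k - e i := by
    intro i
    obtain ⟨k, hki, hk1, hk0⟩ := one_pos_of_sum (fun j => c j (n i)) i (hm i) (hn0 i)
      (fun j hj => hnn i j hj) (fun j => hInt j _ (H.lat _ (hnV i)))
    refine ⟨k, hki, ?_⟩
    rw [h.exp (n i)]
    have : ∀ j, c j (n i) • e j = (if j = k then e k else 0) - (if j = i then e i else 0) := by
      intro j
      by_cases hji : j = i
      · subst hji; rw [hm]; simp [Ne.symm hki]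
      · by_cases hjk : j = k
        · subst hjk
          have hk1 : c j (n i) = 1 := hk1
          simp [hk1, hji]
        · have : c j (n i) = 0 := hk0 j hji hjk
          simp [this, hji, hjk]
    simp only [this, Finset.sum_sub_distrib]
    simp
  choose s hs_ne hs_eq using hsig
  refine ⟨s, hs_ne, fun i => hs_eq i ▸ hnV i, ?_, ?_, ?_, hcard, ?_, hInt⟩
  · intro i x hx h0 hn
    rw [← hs_eq]; exact huniq i x hx h0 hn
  · intro x hx
    simpa only [← hs_eq] using htri x hx
  · intro x hx hx1 i hi
    obtain ⟨n', t', -, -, -, -, -, -, -, -, -, htri', -⟩ := (hFB i).levels H (hup i hi)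
    have h1 := htri' x hx
    rw [hs1 i hi, hx1] at h1
    rcases h1 with h1 | ⟨h1, -⟩ | h1
    · exfalso
      have h2 : ∑ j, pivC c i (n i) j x = 1 := by rw [hs1 i hi, hx1]; exact h1
      obtain ⟨k, hk⟩ := (hFB i).eq x hx h2
      by_cases hki : k = i
      · subst hki
        rw [Function.update_self] at hk
        rw [hk, hn0] at hx1
        norm_num at hx1
      · rw [Function.update_of_ne hki] at hk
        rw [hk, h.sum_e] at hx1
        norm_num at hx1
    · right; linarith
    · left; linarith
  · intro i hi
    rw [← hs_eq]
    exact ⟨_, hgood i hi, hs1 i hi⟩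


theorem Str.lowform (H : Hyp V) {o : Fin d} {s : Fin d → Fin d} (h : FB V e c)
    (hs : Str V o e c s) {x : Fin d → ℝ} (hx : x ∈ V) (hx1 : ∑ j, c j x = -1) {i : Fin d}
    (hi : i ≠ o) (hxi : c i x = -1) :
    ∃ k, k ≠ i ∧ x = e (s i) - e i - e k ∧ s k = i := by
  obtain ⟨c', hg', hc'⟩ := hs.good i hi
  obtain ⟨s', hs'⟩ := hg'.str H
  have h' := hg'.1
  have hci : ∀ j, c i (Function.update e i (e (s i) - e i) j) = if j = i then -1 else 0 := by
    intro j
    by_cases hj : j = i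
    · subst hj
      simp [h.bio, (hs.ne j).symm]
    · simp [hj, h.bio, Ne.symm hj]
  have hx0 : ∑ j, c' j x = 0 := by rw [hc', hx1, hxi]; ring
  obtain ⟨k, hk⟩ : ∃ k, x = Function.update e i (e (s i) - e i) (s' k) -
      Function.update e i (e (s i) - e i) k := by
    rcases hs'.tri x hx with h1 | ⟨-, h1⟩ | h1
    · rw [hx0] at h1; norm_num at h1
    · exact h1
    · rw [hx0] at h1; norm_num at h1
  have hne := hs'.ne k
  have hsk : s' k = i := by
    by_contra hcon
    rw [hk, map_sub, hci, hci, if_neg hcon] at hxi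
    split_ifs at hxi <;> norm_num at hxi
  have hki : k ≠ i := by rw [hsk] at hne; exact hne.symm
  have hxe : x = e (s i) - e i - e k := by
    rw [hk, hsk, Function.update_self, Function.update_of_ne hki]
  refine ⟨k, hki, hxe, ?_⟩
  by_contra hcon
  have hn : e (s k) - e k = Function.update e i (e (s i) - e i) (s k) -
      Function.update e i (e (s i) - e i) k := by
    rw [Function.update_of_ne hki, Function.update_of_ne hcon]
  have hcn : c i (e (s k) - e k) = 0 := by
    rw [hn, map_sub, hci, hci, if_neg hcon, if_neg hki, sub_zero]
  have e1 := hs'.uniq k x hx hx0 (by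
    rw [hk, map_sub, h'.bio, h'.bio, if_pos rfl, if_neg (Ne.symm hne)]; norm_num)
  have e2 := hs'.uniq k (e (s k) - e k) (hs.nV k) (by
    rw [hc', hcn]
    simp only [map_sub, Finset.sum_sub_distrib, h.sum_e, sub_self]) (by
    rw [hn, map_sub, h'.bio, h'.bio, if_pos rfl, if_neg (hs.ne k).symm]; norm_num)
  rw [e1, ← e2, hcn] at hxi
  norm_num at hxi

theorem Str.lowclass (H : Hyp V) {o : Fin d} {s : Fin d → Fin d} (h : FB V e c)
    (hs : Str V o e c s) {x : Fin d → ℝ} (hx : x ∈ V) (hx1 : ∑ j, c j x = -1) :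
    ∃ k, x = - e k ∧ (k ≠ o → s (s k) = k) := by
  by_cases hall : ∀ i, i ≠ o → c i x = 0
  · refine ⟨o, ?_, fun h => absurd rfl h⟩
    have h1 : ∑ j, c j x = c o x := Finset.sum_eq_single o (fun j _ hj => hall j hj) (by simp)
    rw [hx1] at h1
    conv_lhs => rw [h.exp x]
    rw [Finset.sum_eq_single o (fun j _ hj => by rw [hall j hj, zero_smul]) (by simp), ← h1]
    simp
  · push Not at hall
    obtain ⟨i, hi, hne⟩ := hall
    have hxi := (hs.low x hx hx1 i hi).resolve_left hne
    obtain ⟨k, hki, hxe, hsk⟩ := hs.lowform H h hx hx1 hi hxi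
    by_cases hk : k = s i
    · refine ⟨i, ?_, fun _ => by rw [← hk, hsk]⟩
      rw [hxe, hk]; abel
    · exfalso
      have hsi : s i = o := by
        by_contra hcon
        have h1 : c (s i) x = 1 := by
          rw [hxe, map_sub, map_sub, h.bio, h.bio, h.bio, if_pos rfl, if_neg (hs.ne i),
            if_neg (Ne.symm hk)]; ring
        rcases hs.low x hx hx1 _ hcon with h2 | h2 <;> rw [h1] at h2 <;> norm_num at h2
      have hko : k ≠ o := by rw [hsi] at hk; exact hk
      have hxk : c k x = -1 := by
        rw [hxe, map_sub, map_sub, h.bio, h.bio, h.bio, if_pos rfl, if_neg hki, if_neg hk]; ring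
      obtain ⟨k', hk', hxe', -⟩ := hs.lowform H h hx hx1 hko hxk
      rw [hsk] at hxe'
      rw [hxe', map_sub, map_sub, h.bio, h.bio, h.bio, if_pos rfl, if_neg (Ne.symm hki)] at hxi
      split_ifs at hxi <;> norm_num at hxi

/-- The complete description of the vertex set. -/
theorem Str.final (H : Hyp V) {o : Fin d} {s : Fin d → Fin d} (h : FB V e c)
    (ho : e o = ∑ v ∈ V, v) (hs : Str V o e c s) :
    ∃ m : Fin d, (∀ x, x ∈ V ↔ (∃ i, x = e i) ∨ (∃ i, x = e (s i) - e i) ∨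
        (∃ i, i ≠ m ∧ x = - e i)) ∧
      (∀ k, k ≠ o → k ≠ m → s (s k) = k) ∧
      ∀ k, ((Finset.univ.filter (fun i => s i = k)).card : ℝ) =
        1 - (if k = m then 1 else 0) + (if k = o then 1 else 0) := by
  have hd := H.hd
  have hinj := bio_inj h.bio
  set R := V.filter (fun x => ∑ j, c j x = -1) with hR
  set K := Finset.univ.filter (fun k => - e k ∈ V) with hK
  have hse : ∀ k, ∑ j, c j (- e k) = -1 := fun k => by
    simp only [map_neg, Finset.sum_neg_distrib, h.sum_e]
  have hRK : R = K.image (fun k => - e k) := by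
    ext x
    simp only [hR, hK, Finset.mem_filter, Finset.mem_image, Finset.mem_univ, true_and]
    constructor
    · rintro ⟨hx, hx1⟩
      obtain ⟨k, rfl, -⟩ := hs.lowclass H h hx hx1
      exact ⟨k, hx, rfl⟩
    · rintro ⟨k, hk, rfl⟩
      exact ⟨hk, hse k⟩
  have hinjn : Function.Injective (fun k => - e k) := fun a b hab => hinj (neg_injective hab)
  have hKc : K.card = d - 1 := by
    rw [← Finset.card_image_of_injective K hinjn, ← hRK, hR, hs.card]
  have hKcc : Kᶜ.card = 1 := by
    rw [Finset.card_compl, hKc]; simp; omega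
  obtain ⟨m, hm⟩ := Finset.card_eq_one.1 hKcc
  have hKm : ∀ k, - e k ∈ V ↔ k ≠ m := by
    intro k
    have : k ∈ Kᶜ ↔ k = m := by rw [hm]; simp
    simp only [hK, Finset.mem_compl, Finset.mem_filter, Finset.mem_univ, true_and] at this
    rw [← not_iff_not, this]; simp
  have hn0 : ∀ i, ∑ j, c j (e (s i) - e i) = 0 := fun i => by
    simp only [map_sub, Finset.sum_sub_distrib, h.sum_e, sub_self]
  have hmem : ∀ x, x ∈ V ↔ (∃ i, x = e i) ∨ (∃ i, x = e (s i) - e i) ∨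
        (∃ i, i ≠ m ∧ x = - e i) := by
    intro x
    constructor
    · intro hx
      rcases hs.tri x hx with h1 | ⟨-, h1⟩ | h1
      · left; exact h.eq x hx h1
      · right; left; exact h1
      · right; right
        obtain ⟨k, rfl, -⟩ := hs.lowclass H h hx h1
        exact ⟨k, (hKm k).1 hx, rfl⟩
    · rintro (⟨i, rfl⟩ | ⟨i, rfl⟩ | ⟨i, hi, rfl⟩)
      · exact h.mem i
      · exact hs.nV i
      · exact (hKm i).2 hi
  refine ⟨m, hmem, ?_, ?_⟩
  · intro k hko hkm
    obtain ⟨k', hk', hss⟩ := hs.lowclass H h ((hKm k).2 hkm) (hse k)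
    have : k = k' := hinj (neg_injective hk')
    subst this
    exact hss hko
  · intro k
    have hninj : Function.Injective (fun i => e (s i) - e i) := by
      intro a b hab
      have h1 := congrArg (c a) hab
      simp only [map_sub, h.bio, if_neg (hs.ne a).symm] at h1
      by_contra hne
      rw [if_neg hne] at h1
      split_ifs at h1 <;> norm_num at h1
    have hV : V = Finset.univ.image e ∪ (Finset.univ.image (fun i => e (s i) - e i) ∪
        (Finset.univ.erase m).image (fun i => - e i)) := by
      ext x
      rw [hmem]
      simp only [Finset.mem_union, Finset.mem_image, Finset.mem_univ, true_and, Finset.mem_erase,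
        and_true]
      simp only [eq_comm]
    have hd1 : Disjoint (Finset.univ.image (fun i => e (s i) - e i))
        ((Finset.univ.erase m).image (fun i => - e i)) := by
      rw [Finset.disjoint_left]
      intro x hx hx'
      obtain ⟨i, _, rfl⟩ := Finset.mem_image.1 hx
      obtain ⟨j, _, hj⟩ := Finset.mem_image.1 hx'
      have h1 := hse j
      have hj : - e j = e (s i) - e i := hj
      rw [hj, hn0] at h1; norm_num at h1
    have hd2 : Disjoint (Finset.univ.image e) (Finset.univ.image (fun i => e (s i) - e i) ∪
        (Finset.univ.erase m).image (fun i => - e i)) := by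
      rw [Finset.disjoint_left]
      intro x hx hx'
      obtain ⟨i, _, rfl⟩ := Finset.mem_image.1 hx
      have h2 := h.sum_e i
      rcases Finset.mem_union.1 hx' with hx' | hx'
      · obtain ⟨j, _, hj⟩ := Finset.mem_image.1 hx'
        have hj : e (s j) - e j = e i := hj
        rw [← hj, hn0] at h2; norm_num at h2
      · obtain ⟨j, _, hj⟩ := Finset.mem_image.1 hx'
        have hj : - e j = e i := hj
        rw [← hj, hse] at h2; norm_num at h2
    have hsum : c k (e o) = ∑ i, c k (e i) + (∑ i, c k (e (s i) - e i) +
        ∑ i ∈ Finset.univ.erase m, c k (- e i)) := by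
      rw [ho, map_sum]
      conv_lhs => rw [hV]
      rw [Finset.sum_union hd2, Finset.sum_union hd1, Finset.sum_image hinj.injOn,
        Finset.sum_image hninj.injOn, Finset.sum_image hinjn.injOn]
    have h3 := Finset.add_sum_erase Finset.univ (fun i => c k (- e i)) (Finset.mem_univ m)
    have h4 : ∑ i, c k (e (s i)) = ((Finset.univ.filter (fun i => s i = k)).card : ℝ) := by
      simp only [h.bio]
      rw [Finset.sum_boole]
      congr 2
      ext i; simp [eq_comm]
    have h5 : ∑ i, c k (e i) = 1 := by simp [h.bio]
    have h6 : ∑ i, c k (- e i) = -1 := by simp [h.bio]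
    simp only [map_sub, Finset.sum_sub_distrib, h4, h5] at hsum
    rw [h6] at h3
    simp only [map_neg, h.bio] at h3 hsum
    linarith


theorem pairing (o : Fin d) (s : Fin d → Fin d) (S : Finset (Fin d)) :
    (∀ i ∈ S, s i ∈ S ∧ s i ≠ i ∧ s (s i) = i) →
    ∃ m : ℕ, ∃ g : ℕ → Fin d, S.card = 2 * m ∧
      ∀ i, i ∈ S ↔ ∃ j, j < m ∧ (i = g j ∨ i = s (g j)) := by
  induction S using Finset.strongInduction with
  | H S ih =>
    intro hS
    rcases S.eq_empty_or_nonempty with rfl | ⟨a, ha⟩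
    · exact ⟨0, fun _ => o, by simp, by simp⟩
    · obtain ⟨hsa, hne, hss⟩ := hS a ha
      have hsa' : s a ∈ S.erase a := Finset.mem_erase.2 ⟨hne, hsa⟩
      obtain ⟨m, g, hc, hg⟩ := ih ((S.erase a).erase (s a))
        ((Finset.erase_ssubset hsa').trans (Finset.erase_ssubset ha)) (by
          intro i hi
          obtain ⟨h1, h2⟩ := Finset.mem_erase.1 hi
          obtain ⟨h2, h3⟩ := Finset.mem_erase.1 h2
          obtain ⟨h4, h5, h6⟩ := hS i h3
          refine ⟨Finset.mem_erase.2 ⟨fun h => h2 ?_, Finset.mem_erase.2 ⟨fun h => h1 ?_, h4⟩⟩,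
            h5, h6⟩
          · rw [← h6, h, hss]
          · rw [← h6, h])
      refine ⟨m + 1, fun j => if j = m then a else g j, ?_, ?_⟩
      · have h1 := Finset.card_erase_add_one hsa'
        have h2 := Finset.card_erase_add_one ha
        omega
      · intro i
        constructor
        · intro hi
          by_cases h1 : i = a
          · exact ⟨m, by omega, Or.inl (by simp [h1])⟩
          by_cases h2 : i = s a
          · exact ⟨m, by omega, Or.inr (by simp [h2])⟩
          obtain ⟨j, hj, hj'⟩ := (hg i).1 (by simp [h1, h2, hi])
          exact ⟨j, by omega, by simpa [hj.ne] using hj'⟩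
        · rintro ⟨j, hj, hj'⟩
          by_cases hjm : j = m
          · simp only [hjm, if_true] at hj'
            rcases hj' with rfl | rfl
            · exact ha
            · exact hsa
          · simp only [hjm, if_false] at hj'
            have := (hg i).2 ⟨j, by omega, hj'⟩
            exact Finset.mem_of_mem_erase (Finset.mem_of_mem_erase this)

theorem IsLP.comb {F : ℕ → (Fin d → ℝ)} (hF : ∀ p, IsLP (F p)) {y : Fin d → ℝ} (hy : IsLP y) :
    IsLP (∑ p : Fin d, y p • F p) := by
  intro q
  choose a ha using hy
  choose b hb using hF
  refine ⟨∑ p : Fin d, a p * b p q, ?_⟩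
  push_cast
  rw [Finset.sum_apply]
  exact Finset.sum_congr rfl fun p _ => by rw [Pi.smul_apply, smul_eq_mul, ha, hb]

theorem finish {P : Set (Fin d → ℝ)} (hP : P = convexHull ℝ (V : Set (Fin d → ℝ)))
    (h : FB V e c) (hInt : ∀ i, ∀ x, IsLP x → ∃ k : ℤ, c i x = k)
    (F : ℕ → (Fin d → ℝ)) (hF : ∀ p, IsLP (F p))
    (hcov : ∀ i, ∃ y : Fin d → ℝ, IsLP y ∧ ∑ p : Fin d, y p • F p = e i)
    (M : Set (Fin d → ℝ))
    (hM : ∀ x, x ∈ V ↔ ∃ y ∈ M, ∑ p : Fin d, y p • F p = x) :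
    ∃ φ : (Fin d → ℝ) ≃ₗ[ℝ] (Fin d → ℝ), Unimodular φ ∧ φ '' P = convexHull ℝ M := by
  let ψ : (Fin d → ℝ) →ₗ[ℝ] (Fin d → ℝ) :=
    { toFun := fun y => ∑ p : Fin d, y p • F p
      map_add' := fun x y => by
        simp only [Pi.add_apply, add_smul, Finset.sum_add_distrib]
      map_smul' := fun r x => by
        simp only [Pi.smul_apply, smul_eq_mul, mul_smul, Finset.smul_sum, RingHom.id_apply] }
  have hψ : ∀ y, ψ y = ∑ p : Fin d, y p • F p := fun y => rfl
  choose y hyL hy using hcov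
  have hlift : ∀ x, ψ (∑ i, c i x • y i) = x := by
    intro x
    rw [map_sum]
    conv_rhs => rw [h.exp x]
    exact Finset.sum_congr rfl fun i _ => by rw [map_smul, hψ, hy]
  have hsurj : Function.Surjective ψ := fun x => ⟨_, hlift x⟩
  have hinj : Function.Injective ψ := LinearMap.injective_iff_surjective.2 hsurj
  let Ψ := LinearEquiv.ofBijective ψ ⟨hinj, hsurj⟩
  have hΨ : ∀ y, Ψ y = ψ y := fun y => rfl
  refine ⟨Ψ.symm, ?_, ?_⟩
  · intro x
    constructor
    · intro hx
      have : Ψ.symm x = ∑ i, c i x • y i := by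
        rw [LinearEquiv.symm_apply_eq, hΨ, hlift]
      rw [this]
      intro q
      choose a ha using fun i => hInt i x hx
      choose b hb using hyL
      refine ⟨∑ i, a i * b i q, ?_⟩
      push_cast
      rw [Finset.sum_apply]
      exact Finset.sum_congr rfl fun p _ => by rw [Pi.smul_apply, smul_eq_mul, ha, hb]
    · intro hx
      have : x = ψ (Ψ.symm x) := by rw [← hΨ, LinearEquiv.apply_symm_apply]
      rw [this]
      exact IsLP.comb hF hx
  · rw [hP]
    have h1 := LinearMap.image_convexHull (Ψ.symm : (Fin d → ℝ) →ₗ[ℝ] (Fin d → ℝ))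
      (V : Set (Fin d → ℝ))
    have h2 : (Ψ.symm : (Fin d → ℝ) →ₗ[ℝ] (Fin d → ℝ)) '' (V : Set (Fin d → ℝ)) = M := by
      ext z
      constructor
      · rintro ⟨x, hx, rfl⟩
        obtain ⟨w, hw, rfl⟩ := (hM x).1 hx
        have : Ψ.symm (∑ p : Fin d, w p • F p) = w := by
          rw [LinearEquiv.symm_apply_eq, hΨ, hψ]
        change Ψ.symm _ ∈ M
        rw [this]; exact hw
      · intro hz
        refine ⟨ψ z, (hM _).2 ⟨z, hz, rfl⟩, ?_⟩
        change Ψ.symm (ψ z) = z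
        rw [← hΨ, LinearEquiv.symm_apply_apply]
    rw [h2] at h1
    exact h1

theorem psi2 (F : ℕ → (Fin d → ℝ)) (q : ℕ) (hq : q + 1 < d) (v : Fin 2 → ℤ) :
    ∑ p : Fin d, embed2 d q v p • F p = (v 0 : ℝ) • F q + (v 1 : ℝ) • F (q + 1) := by
  have h1 : ∀ p : Fin d, embed2 d q v p • F p =
      (if p = (⟨q, by omega⟩ : Fin d) then (v 0 : ℝ) • F p else 0) +
      (if p = (⟨q + 1, hq⟩ : Fin d) then (v 1 : ℝ) • F p else 0) := by
    intro p
    unfold embed2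
    simp only [Fin.ext_iff]
    split_ifs <;> first | omega | simp
  simp only [h1, Finset.sum_add_distrib, Finset.sum_ite_eq', Finset.mem_univ, if_true]

theorem psi3 (F : ℕ → (Fin d → ℝ)) (hq : 2 < d) (v : Fin 3 → ℤ) :
    ∑ p : Fin d, embed3 d v p • F p =
      (v 0 : ℝ) • F 0 + (v 1 : ℝ) • F 1 + (v 2 : ℝ) • F 2 := by
  have h1 : ∀ p : Fin d, embed3 d v p • F p =
      (if p = (⟨0, by omega⟩ : Fin d) then (v 0 : ℝ) • F p else 0) +
      (if p = (⟨1, by omega⟩ : Fin d) then (v 1 : ℝ) • F p else 0) +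
      (if p = (⟨2, by omega⟩ : Fin d) then (v 2 : ℝ) • F p else 0) := by
    intro p
    unfold embed3
    simp only [Fin.ext_iff]
    split_ifs <;> first | omega | simp
  simp only [h1, Finset.sum_add_distrib, Finset.sum_ite_eq', Finset.mem_univ, if_true]

theorem isLP_embed2 (q : ℕ) (v : Fin 2 → ℤ) : IsLP (embed2 d q v) := by
  intro i
  unfold embed2
  split_ifs
  · exact ⟨_, rfl⟩
  · exact ⟨_, rfl⟩
  · exact ⟨0, by simp⟩

theorem isLP_embed3 (v : Fin 3 → ℤ) : IsLP (embed3 d v) := by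
  intro i
  unfold embed3
  split_ifs
  · exact ⟨_, rfl⟩
  · exact ⟨_, rfl⟩
  · exact ⟨_, rfl⟩
  · exact ⟨0, by simp⟩

theorem IsLP.neg' {x : Fin d → ℝ} (hx : IsLP x) : IsLP (-x) := fun i => by
  obtain ⟨n, hn⟩ := hx i
  exact ⟨-n, by simp [hn]⟩

theorem IsLP.sub' {x y : Fin d → ℝ} (hx : IsLP x) (hy : IsLP y) : IsLP (x - y) := fun i => by
  obtain ⟨n, hn⟩ := hx i
  obtain ⟨m, hm⟩ := hy i
  exact ⟨n - m, by simp [hn, hm]⟩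

theorem hexmem (F : ℕ → (Fin d → ℝ)) (q : ℕ) (hq : q + 1 < d) (x : Fin d → ℝ) :
    (∃ y ∈ embed2 d q '' V2v, ∑ p : Fin d, y p • F p = x) ↔
      x = F q ∨ x = F (q + 1) ∨ x = F q + F (q + 1) ∨ x = - F q ∨ x = - F (q + 1) ∨
        x = - F q - F (q + 1) := by
  simp only [Set.exists_mem_image, psi2 F q hq, V2v, Set.mem_insert_iff, Set.mem_singleton_iff,
    exists_eq_or_imp, exists_eq_left]
  simp [eq_comm, sub_eq_add_neg]

theorem pentmem (F : ℕ → (Fin d → ℝ)) (q : ℕ) (hq : q + 1 < d) (x : Fin d → ℝ) :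
    (∃ y ∈ embed2 d q '' tV2v, ∑ p : Fin d, y p • F p = x) ↔
      x = F q ∨ x = F (q + 1) ∨ x = F q + F (q + 1) ∨ x = - F q ∨ x = - F (q + 1) := by
  simp only [Set.exists_mem_image, psi2 F q hq, tV2v, Set.mem_insert_iff, Set.mem_singleton_iff,
    exists_eq_or_imp, exists_eq_left]
  simp [eq_comm]

theorem q3mem (F : ℕ → (Fin d → ℝ)) (hq : 2 < d) (x : Fin d → ℝ) :
    (∃ y ∈ embed3 d '' Q3'v, ∑ p : Fin d, y p • F p = x) ↔
      x = F 0 ∨ x = - F 0 ∨ x = F 1 ∨ x = - F 1 ∨ x = F 0 + F 1 ∨ x = - F 0 - F 1 ∨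
        x = F 2 ∨ x = F 0 - F 2 := by
  simp only [Set.exists_mem_image, psi3 F hq, Q3'v, Set.mem_insert_iff, Set.mem_singleton_iff,
    exists_eq_or_imp, exists_eq_left]
  simp [eq_comm, sub_eq_add_neg]


theorem even_case (H : Hyp V) {P : Set (Fin d → ℝ)}
    (hP : P = convexHull ℝ (V : Set (Fin d → ℝ))) (h : FB V e c)
    (hInt : ∀ i, ∀ x, IsLP x → ∃ k : ℤ, c i x = k) {o : Fin d} {s : Fin d → Fin d}
    (hne : ∀ i, s i ≠ i) (hss : ∀ i, s (s i) = i)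
    (hmem : ∀ x, x ∈ V ↔ (∃ i, x = e i) ∨ (∃ i, x = e (s i) - e i) ∨ (∃ i, i ≠ o ∧ x = - e i)) :
    Even d ∧ ∃ φ : (Fin d → ℝ) ≃ₗ[ℝ] (Fin d → ℝ), Unimodular φ ∧ φ '' P = splitModel2 d tV2v := by
  have hd := H.hd
  set k := s o with hk
  have hko : k ≠ o := hne o
  have hsk : s k = o := hss o
  obtain ⟨m, g, hc, hg⟩ := pairing o s ((Finset.univ.erase o).erase k) (by
    intro i hi
    obtain ⟨h1, h2⟩ := Finset.mem_erase.1 hi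
    have h3 := Finset.ne_of_mem_erase h2
    refine ⟨?_, hne i, hss i⟩
    simp only [Finset.mem_erase, Finset.mem_univ, and_true]
    refine ⟨fun h => h3 ?_, fun h => h1 ?_⟩
    · rw [← hss i, h, hsk]
    · rw [← hss i, h])
  have hcard : d = 2 * m + 2 := by
    rw [Finset.card_erase_of_mem (by simp [hko]), Finset.card_erase_of_mem (by simp)] at hc
    simp at hc
    omega
  have hg' : ∀ i, i = o ∨ i = k ∨ ∃ j, j < m ∧ (i = g j ∨ i = s (g j)) := by
    intro i
    by_cases h1 : i = o
    · exact Or.inl h1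
    by_cases h2 : i = k
    · exact Or.inr (Or.inl h2)
    exact Or.inr (Or.inr ((hg i).1 (by simp [h1, h2])))
  have hgo : ∀ j, j < m → g j ≠ o ∧ s (g j) ≠ o := by
    intro j hj
    have h1 := (hg (g j)).2 ⟨j, hj, Or.inl rfl⟩
    have h2 := (hg (s (g j))).2 ⟨j, hj, Or.inr rfl⟩
    simp only [Finset.mem_erase, Finset.mem_univ, and_true] at h1 h2
    exact ⟨h1.2, h2.2⟩
  let F : ℕ → (Fin d → ℝ) := fun n => if n = 0 then e k else if n = 1 then e o - e k else
    if n % 2 = 0 then e (g ((n - 2) / 2)) else - e (s (g ((n - 2) / 2)))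
  have F0 : F 0 = e k := by simp [F]
  have F1 : F (0 + 1) = e o - e k := by simp [F]
  have F2 : ∀ j, F (2 * j + 2) = e (g j) := fun j => by
    simp only [F]
    rw [if_neg (by omega), if_neg (by omega), if_pos (by omega)]
    congr 2; omega
  have F3 : ∀ j, F (2 * j + 2 + 1) = - e (s (g j)) := fun j => by
    simp only [F]
    rw [if_neg (by omega), if_neg (by omega), if_neg (by omega)]
    congr 4; omega
  have heL : ∀ i, IsLP (e i) := fun i => H.lat _ (h.mem i)
  refine ⟨⟨m + 1, by omega⟩, ?_⟩
  unfold splitModel2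
  refine finish hP h hInt F ?_ ?_ _ ?_
  · intro p
    simp only [F]
    split_ifs
    · exact heL _
    · exact (heL _).sub' (heL _)
    · exact heL _
    · exact (heL _).neg'
  · intro i
    rcases hg' i with rfl | rfl | ⟨j, hj, rfl | rfl⟩
    · refine ⟨embed2 d 0 ![1, 1], isLP_embed2 _ _, ?_⟩
      rw [psi2 F 0 (by omega), F0, F1]; simp
    · refine ⟨embed2 d 0 ![1, 0], isLP_embed2 _ _, ?_⟩
      rw [psi2 F 0 (by omega), F0, F1]; simp
    · refine ⟨embed2 d (2 * j + 2) ![1, 0], isLP_embed2 _ _, ?_⟩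
      rw [psi2 F _ (by omega), F2, F3]; simp
    · refine ⟨embed2 d (2 * j + 2) ![0, -1], isLP_embed2 _ _, ?_⟩
      rw [psi2 F _ (by omega), F2, F3]; simp
  · intro x
    have hm : (d - 2) / 2 = m := by omega
    have key : (∃ y ∈ (embed2 d 0 '' tV2v ∪ ⋃ j ∈ Finset.range ((d - 2) / 2),
        embed2 d (2 * j + 2) '' V2v), ∑ p : Fin d, y p • F p = x) ↔
        (x = e k ∨ x = e o - e k ∨ x = e o ∨ x = - e k ∨ x = e k - e o) ∨
        ∃ j, j < m ∧ (x = e (g j) ∨ x = - e (s (g j)) ∨ x = e (g j) - e (s (g j)) ∨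
          x = - e (g j) ∨ x = e (s (g j)) ∨ x = e (s (g j)) - e (g j)) := by
      have hp := pentmem F 0 (by omega) x
      rw [F0, F1] at hp
      have hh : ∀ j, j < m → _ := fun j hj => hexmem F (2 * j + 2) (by omega) x
      simp only [F2, F3] at hh
      rw [hm]
      constructor
      · rintro ⟨y, hy | hy, rfl⟩
        · left
          have := hp.1 ⟨y, hy, rfl⟩
          simpa [neg_sub] using this
        · right
          simp only [Set.mem_iUnion, Finset.mem_range] at hy
          obtain ⟨j, hj, hy⟩ := hy
          refine ⟨j, hj, ?_⟩
          have := (hh j hj).1 ⟨y, hy, rfl⟩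
          rw [neg_neg, sub_neg_eq_add, neg_add_eq_sub, ← sub_eq_add_neg] at this
          exact this
      · rintro (hx | ⟨j, hj, hx⟩)
        · obtain ⟨y, hy, rfl⟩ := hp.2 (by simpa [neg_sub] using hx)
          exact ⟨y, Or.inl hy, rfl⟩
        · obtain ⟨y, hy, rfl⟩ := (hh j hj).2 (by
            rw [neg_neg, sub_neg_eq_add, neg_add_eq_sub, ← sub_eq_add_neg]; exact hx)
          refine ⟨y, Or.inr ?_, rfl⟩
          simp only [Set.mem_iUnion, Finset.mem_range]
          exact ⟨j, hj, hy⟩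
    rw [key, hmem]
    constructor
    · rintro (⟨i, rfl⟩ | ⟨i, rfl⟩ | ⟨i, hi, rfl⟩)
      · rcases hg' i with rfl | rfl | ⟨j, hj, rfl | rfl⟩
        · left; simp only [true_or, or_true]
        · left; simp only [true_or, or_true]
        · right; exact ⟨j, hj, by simp only [true_or, or_true]⟩
        · right; exact ⟨j, hj, by simp only [true_or, or_true]⟩
      · rcases hg' i with rfl | rfl | ⟨j, hj, rfl | rfl⟩
        · left; rw [← hk]; simp only [true_or, or_true]
        · left; rw [hsk]; simp only [true_or, or_true]
        · right; exact ⟨j, hj, by simp only [true_or, or_true]⟩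
        · right; rw [hss]; exact ⟨j, hj, by simp only [true_or, or_true]⟩
      · rcases hg' i with rfl | rfl | ⟨j, hj, rfl | rfl⟩
        · exact absurd rfl hi
        · left; simp only [true_or, or_true]
        · right; exact ⟨j, hj, by simp only [true_or, or_true]⟩
        · right; exact ⟨j, hj, by simp only [true_or, or_true]⟩
    · rintro ((rfl | rfl | rfl | rfl | rfl) | ⟨j, hj, (rfl | rfl | rfl | rfl | rfl | rfl)⟩)
      · exact Or.inl ⟨_, rfl⟩
      · exact Or.inr (Or.inl ⟨k, by rw [hsk]⟩)
      · exact Or.inl ⟨_, rfl⟩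
      · exact Or.inr (Or.inr ⟨k, hko, rfl⟩)
      · exact Or.inr (Or.inl ⟨o, rfl⟩)
      · exact Or.inl ⟨_, rfl⟩
      · exact Or.inr (Or.inr ⟨_, (hgo j hj).2, rfl⟩)
      · exact Or.inr (Or.inl ⟨s (g j), by rw [hss]⟩)
      · exact Or.inr (Or.inr ⟨_, (hgo j hj).1, rfl⟩)
      · exact Or.inl ⟨_, rfl⟩
      · exact Or.inr (Or.inl ⟨_, rfl⟩)

theorem odd_case (H : Hyp V) {P : Set (Fin d → ℝ)}
    (hP : P = convexHull ℝ (V : Set (Fin d → ℝ))) (h : FB V e c)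
    (hInt : ∀ i, ∀ x, IsLP x → ∃ k : ℤ, c i x = k) {o q r : Fin d} {s : Fin d → Fin d}
    (hne : ∀ i, s i ≠ i) (hqo : q ≠ o) (hro : r ≠ o) (hqr : q ≠ r)
    (hso : s o = q) (hsq : s q = o) (hsr : s r = o) (hnr : ∀ i, s i ≠ r)
    (hss : ∀ i, i ≠ r → s (s i) = i)
    (hmem : ∀ x, x ∈ V ↔ (∃ i, x = e i) ∨ (∃ i, x = e (s i) - e i) ∨ (∃ i, i ≠ r ∧ x = - e i)) :
    Odd d ∧ ∃ φ : (Fin d → ℝ) ≃ₗ[ℝ] (Fin d → ℝ), Unimodular φ ∧ φ '' P = splitModel3 d Q3'v := by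
  have hd := H.hd
  obtain ⟨m, g, hc, hg⟩ := pairing o s (((Finset.univ.erase o).erase q).erase r) (by
    intro i hi
    simp only [Finset.mem_erase, Finset.mem_univ, and_true] at hi ⊢
    obtain ⟨h1, h2, h3⟩ := hi
    have h4 := hss i h1
    refine ⟨⟨hnr i, fun h => h3 ?_, fun h => h2 ?_⟩, hne i, h4⟩
    · rw [← h4, h, hsq]
    · rw [← h4, h, hso])
  have hcard : d = 2 * m + 3 := by
    rw [Finset.card_erase_of_mem (by simp [hro, hqr.symm]),
      Finset.card_erase_of_mem (by simp [hqo]), Finset.card_erase_of_mem (by simp)] at hc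
    simp at hc
    omega
  have hg' : ∀ i, i = o ∨ i = q ∨ i = r ∨ ∃ j, j < m ∧ (i = g j ∨ i = s (g j)) := by
    intro i
    by_cases h1 : i = o
    · exact Or.inl h1
    by_cases h2 : i = q
    · exact Or.inr (Or.inl h2)
    by_cases h3 : i = r
    · exact Or.inr (Or.inr (Or.inl h3))
    exact Or.inr (Or.inr (Or.inr ((hg i).1 (by simp [h1, h2, h3]))))
  have hgo : ∀ j, j < m → g j ≠ r := by
    intro j hj
    have h1 := (hg (g j)).2 ⟨j, hj, Or.inl rfl⟩
    simp only [Finset.mem_erase, Finset.mem_univ, and_true] at h1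
    exact h1.1
  let F : ℕ → (Fin d → ℝ) := fun n => if n = 0 then e o else if n = 1 then e q - e o else
    if n = 2 then e r else
    if n % 2 = 1 then e (g ((n - 3) / 2)) else - e (s (g ((n - 3) / 2)))
  have F0 : F 0 = e o := by simp [F]
  have F1 : F 1 = e q - e o := by simp [F]
  have F2 : F 2 = e r := by simp [F]
  have F3 : ∀ j, F (2 * j + 3) = e (g j) := fun j => by
    simp only [F]
    rw [if_neg (by omega), if_neg (by omega), if_neg (by omega), if_pos (by omega)]
    congr 2; omega
  have F4 : ∀ j, F (2 * j + 3 + 1) = - e (s (g j)) := fun j => by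
    simp only [F]
    rw [if_neg (by omega), if_neg (by omega), if_neg (by omega), if_neg (by omega)]
    congr 4; omega
  have heL : ∀ i, IsLP (e i) := fun i => H.lat _ (h.mem i)
  refine ⟨⟨m + 1, by omega⟩, ?_⟩
  unfold splitModel3
  refine finish hP h hInt F ?_ ?_ _ ?_
  · intro p
    simp only [F]
    split_ifs
    · exact heL _
    · exact (heL _).sub' (heL _)
    · exact heL _
    · exact heL _
    · exact (heL _).neg'
  · intro i
    rcases hg' i with rfl | rfl | rfl | ⟨j, hj, rfl | rfl⟩
    · refine ⟨embed3 d ![1, 0, 0], isLP_embed3 _, ?_⟩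
      rw [psi3 F (by omega), F0, F1, F2]; simp
    · refine ⟨embed3 d ![1, 1, 0], isLP_embed3 _, ?_⟩
      rw [psi3 F (by omega), F0, F1, F2]; simp
    · refine ⟨embed3 d ![0, 0, 1], isLP_embed3 _, ?_⟩
      rw [psi3 F (by omega), F0, F1, F2]; simp
    · refine ⟨embed2 d (2 * j + 3) ![1, 0], isLP_embed2 _ _, ?_⟩
      rw [psi2 F _ (by omega), F3, F4]; simp
    · refine ⟨embed2 d (2 * j + 3) ![0, -1], isLP_embed2 _ _, ?_⟩
      rw [psi2 F _ (by omega), F3, F4]; simp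
  · intro x
    have hm : (d - 3) / 2 = m := by omega
    have key : (∃ y ∈ (embed3 d '' Q3'v ∪ ⋃ j ∈ Finset.range ((d - 3) / 2),
        embed2 d (2 * j + 3) '' V2v), ∑ p : Fin d, y p • F p = x) ↔
        (x = e o ∨ x = - e o ∨ x = e q - e o ∨ x = e o - e q ∨ x = e q ∨ x = - e q ∨
          x = e r ∨ x = e o - e r) ∨
        ∃ j, j < m ∧ (x = e (g j) ∨ x = - e (s (g j)) ∨ x = e (g j) - e (s (g j)) ∨
          x = - e (g j) ∨ x = e (s (g j)) ∨ x = e (s (g j)) - e (g j)) := by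
      have hp := q3mem F (by omega) x
      rw [F0, F1, F2, neg_sub, add_sub_cancel, show - e o - (e q - e o) = - e q by abel] at hp
      have hh : ∀ j, j < m → _ := fun j hj => hexmem F (2 * j + 3) (by omega) x
      simp only [F3, F4] at hh
      rw [hm]
      constructor
      · rintro ⟨y, hy | hy, rfl⟩
        · left
          exact hp.1 ⟨y, hy, rfl⟩
        · right
          simp only [Set.mem_iUnion, Finset.mem_range] at hy
          obtain ⟨j, hj, hy⟩ := hy
          refine ⟨j, hj, ?_⟩
          have := (hh j hj).1 ⟨y, hy, rfl⟩
          rw [neg_neg, sub_neg_eq_add, neg_add_eq_sub, ← sub_eq_add_neg] at this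
          exact this
      · rintro (hx | ⟨j, hj, hx⟩)
        · obtain ⟨y, hy, rfl⟩ := hp.2 hx
          exact ⟨y, Or.inl hy, rfl⟩
        · obtain ⟨y, hy, rfl⟩ := (hh j hj).2 (by
            rw [neg_neg, sub_neg_eq_add, neg_add_eq_sub, ← sub_eq_add_neg]; exact hx)
          refine ⟨y, Or.inr ?_, rfl⟩
          simp only [Set.mem_iUnion, Finset.mem_range]
          exact ⟨j, hj, hy⟩
    rw [key, hmem]
    constructor
    · rintro (⟨i, rfl⟩ | ⟨i, rfl⟩ | ⟨i, hi, rfl⟩)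
      · rcases hg' i with rfl | rfl | rfl | ⟨j, hj, rfl | rfl⟩
        · left; simp only [true_or, or_true]
        · left; simp only [true_or, or_true]
        · left; simp only [true_or, or_true]
        · right; exact ⟨j, hj, by simp only [true_or, or_true]⟩
        · right; exact ⟨j, hj, by simp only [true_or, or_true]⟩
      · rcases hg' i with rfl | rfl | rfl | ⟨j, hj, rfl | rfl⟩
        · left; rw [hso]; simp only [true_or, or_true]
        · left; rw [hsq]; simp only [true_or, or_true]
        · left; rw [hsr]; simp only [true_or, or_true]
        · right; exact ⟨j, hj, by simp only [true_or, or_true]⟩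
        · right; rw [hss _ (hgo j hj)]; exact ⟨j, hj, by simp only [true_or, or_true]⟩
      · rcases hg' i with rfl | rfl | rfl | ⟨j, hj, rfl | rfl⟩
        · left; simp only [true_or, or_true]
        · left; simp only [true_or, or_true]
        · exact absurd rfl hi
        · right; exact ⟨j, hj, by simp only [true_or, or_true]⟩
        · right; exact ⟨j, hj, by simp only [true_or, or_true]⟩
    · rintro ((rfl | rfl | rfl | rfl | rfl | rfl | rfl | rfl) |
        ⟨j, hj, (rfl | rfl | rfl | rfl | rfl | rfl)⟩)
      · exact Or.inl ⟨_, rfl⟩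
      · exact Or.inr (Or.inr ⟨o, hro.symm, rfl⟩)
      · exact Or.inr (Or.inl ⟨o, by rw [hso]⟩)
      · exact Or.inr (Or.inl ⟨q, by rw [hsq]⟩)
      · exact Or.inl ⟨_, rfl⟩
      · exact Or.inr (Or.inr ⟨q, hqr, rfl⟩)
      · exact Or.inl ⟨_, rfl⟩
      · exact Or.inr (Or.inl ⟨r, by rw [hsr]⟩)
      · exact Or.inl ⟨_, rfl⟩
      · exact Or.inr (Or.inr ⟨_, hnr _, rfl⟩)
      · exact Or.inr (Or.inl ⟨s (g j), by rw [hss _ (hgo j hj)]⟩)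
      · exact Or.inr (Or.inr ⟨_, hgo j hj, rfl⟩)
      · exact Or.inl ⟨_, rfl⟩
      · exact Or.inr (Or.inl ⟨_, rfl⟩)

theorem classify (H : Hyp V) {P : Set (Fin d → ℝ)}
    (hP : P = convexHull ℝ (V : Set (Fin d → ℝ))) :
    (Even d ∧ ∃ φ : (Fin d → ℝ) ≃ₗ[ℝ] (Fin d → ℝ), Unimodular φ ∧
        φ '' P = splitModel2 d tV2v) ∨
    (Odd d ∧ ∃ φ : (Fin d → ℝ) ≃ₗ[ℝ] (Fin d → ℝ), Unimodular φ ∧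
        φ '' P = splitModel3 d Q3'v) := by
  obtain ⟨e, c, o, hg⟩ := exists_good H
  obtain ⟨s, hs⟩ := hg.str H
  obtain ⟨m, hmem, hss, hcnt⟩ := hs.final H hg.1 hg.2.1
  have hcnt1 := hcnt o
  by_cases hmo : m = o
  · left
    subst hmo
    rw [if_pos rfl] at hcnt1
    have hc1 : (Finset.univ.filter (fun i => s i = m)).card = 1 := by
      have : ((Finset.univ.filter (fun i => s i = m)).card : ℝ) = (1 : ℕ) := by
        rw [hcnt1]; norm_num
      exact_mod_cast this
    obtain ⟨k, hk⟩ := Finset.card_pos.1 (by rw [hc1]; norm_num :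
      0 < (Finset.univ.filter (fun i => s i = m)).card)
    have hk : s k = m := (Finset.mem_filter.1 hk).2
    have hkm : k ≠ m := fun h => hs.ne k (by rw [hk, h])
    refine even_case H hP hg.1 hs.ints hs.ne ?_ hmem
    intro i
    by_cases hi : i = m
    · subst hi
      have := hss k hkm hkm
      rw [hk] at this
      rw [this, hk]
    · exact hss i hi hi
  · right
    rw [if_neg (Ne.symm hmo), if_pos rfl] at hcnt1
    have hc2 : (Finset.univ.filter (fun i => s i = o)).card = 2 := by
      have : ((Finset.univ.filter (fun i => s i = o)).card : ℝ) = (2 : ℕ) := by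
        rw [hcnt1]; norm_num
      exact_mod_cast this
    have hcm := hcnt m
    rw [if_pos rfl, if_neg hmo] at hcm
    have hnr : ∀ i, s i ≠ m := by
      intro i hi
      have h0 : (Finset.univ.filter (fun i => s i = m)).card = 0 := by
        have : ((Finset.univ.filter (fun i => s i = m)).card : ℝ) = (0 : ℕ) := by
          rw [hcm]; norm_num
        exact_mod_cast this
      rw [Finset.card_eq_zero] at h0
      have : i ∈ Finset.univ.filter (fun i => s i = m) := by simp [hi]
      rw [h0] at this
      simp at this
    obtain ⟨a, b, hab, hfil⟩ := Finset.card_eq_two.1 hc2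
    have ha : s a = o := by
      have : a ∈ Finset.univ.filter (fun i => s i = o) := by rw [hfil]; simp
      simpa using this
    have hb : s b = o := by
      have : b ∈ Finset.univ.filter (fun i => s i = o) := by rw [hfil]; simp
      simpa using this
    have hso : ∀ p, p ≠ m → s p = o → s o = p := by
      intro p hp hpo
      have := hss p (fun h => hs.ne p (by rw [hpo, h])) hp
      rwa [hpo] at this
    have hex : ∃ q, q ≠ m ∧ s q = o ∧ s m = o := by
      by_cases ham : a = m
      · exact ⟨b, fun h => hab (by rw [ham, h]), hb, by rw [← ham, ha]⟩
      · by_cases hbm : b = m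
        · exact ⟨a, ham, ha, by rw [← hbm, hb]⟩
        · exact absurd ((hso a ham ha).symm.trans (hso b hbm hb)) hab
    obtain ⟨q, hqm, hq, hm⟩ := hex
    have hqo : q ≠ o := fun h => hs.ne q (by rw [hq, h])
    refine odd_case H hP hg.1 hs.ints hs.ne hqo hmo hqm (hso q hqm hq) hq hm hnr ?_ hmem
    intro i hi
    by_cases hio : i = o
    · subst hio; rw [hso q hqm hq, hq]
    · exact hss i hio hi


/-! ### From the polytope to the combinatorial data -/

/-- The coordinate vector of a linear functional. -/
def coordVec (u : (Fin d → ℝ) →ₗ[ℝ] ℝ) : Fin d → ℝ := fun i => u (Pi.single i 1)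

theorem dotp_coordVec (u : (Fin d → ℝ) →ₗ[ℝ] ℝ) (x : Fin d → ℝ) : dotp (coordVec u) x = u x := by
  have h : x = ∑ i, x i • (Pi.single i (1 : ℝ) : Fin d → ℝ) := by
    ext j
    simp [Finset.sum_apply, Pi.single_apply]
  conv_rhs => rw [h]
  rw [map_sum]
  unfold dotp coordVec
  exact Finset.sum_congr rfl fun i _ => by rw [map_smul, smul_eq_mul, mul_comm]

/-- The linear functional attached to a vector. -/
def dotL (a : Fin d → ℝ) : (Fin d → ℝ) →ₗ[ℝ] ℝ where
  toFun x := dotp a x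
  map_add' x y := by simp [dotp, mul_add, Finset.sum_add_distrib]
  map_smul' r x := by
    simp only [dotp, Pi.smul_apply, smul_eq_mul, RingHom.id_apply, Finset.mul_sum]
    exact Finset.sum_congr rfl fun i _ => by ring

theorem dotL_apply (a x : Fin d → ℝ) : dotL a x = dotp a x := rfl

theorem dotp_comm (a x : Fin d → ℝ) : dotp a x = dotp x a := by
  simp [dotp, mul_comm]

theorem dotp_single (a : Fin d → ℝ) (i : Fin d) : dotp a (Pi.single i 1) = a i := by
  simp [dotp, Pi.single_apply]

theorem dotp_add_left (a b x : Fin d → ℝ) : dotp (a + b) x = dotp a x + dotp b x := by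
  simp [dotp, add_mul, Finset.sum_add_distrib]

theorem dotp_smul_left (r : ℝ) (a x : Fin d → ℝ) : dotp (r • a) x = r * dotp a x := by
  simp only [dotp, Pi.smul_apply, smul_eq_mul, Finset.mul_sum]
  exact Finset.sum_congr rfl fun i _ => by ring

/-- Two vectors whose products agree on a spanning set are equal. -/
theorem eq_of_dotp_eq {S : Set (Fin d → ℝ)} (hS : Submodule.span ℝ S = ⊤) {a b : Fin d → ℝ}
    (h : ∀ v ∈ S, dotp a v = dotp b v) : a = b := by
  have : dotL a = dotL b := LinearMap.ext_on hS (fun v hv => h v hv)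
  ext i
  have := congrArg (fun f => f (Pi.single i 1)) this
  simpa only [dotL_apply, dotp_single] using this

theorem le_hull {S : Set (Fin d → ℝ)} (u : (Fin d → ℝ) →ₗ[ℝ] ℝ) {r : ℝ}
    (h : ∀ v ∈ S, u v ≤ r) : ∀ x ∈ convexHull ℝ S, u x ≤ r := by
  intro x hx
  have : convexHull ℝ S ⊆ {x | u x ≤ r} :=
    convexHull_min h (convex_halfSpace_le u.isLinear r)
  exact this hx

/-- Small multiples of any vector lie in a neighbourhood of zero. -/
theorem small_mem {P : Set (Fin d → ℝ)} (h0 : (0 : Fin d → ℝ) ∈ interior P) (z : Fin d → ℝ) :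
    ∃ ε : ℝ, 0 < ε ∧ ε • z ∈ P ∧ (-ε) • z ∈ P := by
  have hc : Continuous (fun t : ℝ => t • z) := by fun_prop
  have hn : (fun t : ℝ => t • z) ⁻¹' P ∈ nhds (0 : ℝ) := by
    apply hc.continuousAt
    simpa using mem_interior_iff_mem_nhds.1 h0
  obtain ⟨δ, hδ, hb⟩ := Metric.mem_nhds_iff.1 hn
  refine ⟨δ / 2, by positivity, hb ?_, hb ?_⟩
  · rw [Metric.mem_ball, Real.dist_eq, sub_zero, abs_of_pos (by positivity)]; linarith
  · rw [Metric.mem_ball, Real.dist_eq, sub_zero, abs_neg, abs_of_pos (by positivity)]; linarith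

theorem mid_open (a z : Fin d → ℝ) : a ∈ openSegment ℝ (a + z) (a - z) := by
  refine ⟨1 / 2, 1 / 2, by norm_num, by norm_num, by norm_num, ?_⟩
  ext i
  simp
  ring

/-- A vertex of the polytope is not zero. -/
theorem zero_not_extreme (hd : 3 ≤ d) {P : Set (Fin d → ℝ)} (h0 : (0 : Fin d → ℝ) ∈ interior P) :
    (0 : Fin d → ℝ) ∉ Set.extremePoints ℝ P := by
  intro hx
  obtain ⟨ε, hε, h1, h2⟩ := small_mem h0 (Pi.single ⟨0, by omega⟩ (1 : ℝ))
  have hm := mid_open (0 : Fin d → ℝ) (ε • Pi.single ⟨0, by omega⟩ (1 : ℝ))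
  rw [zero_add, zero_sub, ← neg_smul] at hm
  have h := ((mem_extremePoints.1 hx).2 _ h1 _ h2 hm).1
  have := congrFun h ⟨0, by omega⟩
  simp at this
  linarith

theorem neg_of_interior {P : Set (Fin d → ℝ)} (h0 : (0 : Fin d → ℝ) ∈ interior P)
    (hPV : P = convexHull ℝ (V : Set (Fin d → ℝ))) (u : (Fin d → ℝ) →ₗ[ℝ] ℝ) (hu : u ≠ 0) :
    ∃ v ∈ V, u v < 0 := by
  by_contra! hcon
  have hP : ∀ x ∈ P, (-u) x ≤ 0 := by
    rw [hPV]
    refine le_hull (-u) ?_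
    intro v hv
    have := hcon v hv
    simpa using this
  apply hu
  ext1 i
  obtain ⟨ε, hε, h1, h2⟩ := small_mem h0 (Pi.single i (1 : ℝ))
  have h3 := hP _ h1
  have h4 := hP _ h2
  simp only [LinearMap.neg_apply, map_smul, smul_eq_mul] at h3 h4
  have : u (Pi.single i 1) = 0 := by
    have : ε * u (Pi.single i 1) = 0 := by linarith
    rcases mul_eq_zero.1 this with h | h
    · linarith
    · exact h
  ext
  simpa using this

/-- A dual point with spanning tight vertices is extreme in the dual polytope. -/
theorem dual_extreme {P S : Set (Fin d → ℝ)} {a : Fin d → ℝ} (ha : a ∈ dualPolytope P)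
    (hSP : S ⊆ P) (hS : Submodule.span ℝ S = ⊤) (h1 : ∀ v ∈ S, dotp a v = 1) :
    a ∈ Set.extremePoints ℝ (dualPolytope P) := by
  rw [mem_extremePoints_iff_left]
  refine ⟨ha, ?_⟩
  rintro b hb c hc ⟨s, t, hs, ht, hst, rfl⟩
  refine eq_of_dotp_eq hS fun v hv => ?_
  have h2 := h1 v hv
  have hb1 := hb v (hSP hv)
  have hc1 := hc v (hSP hv)
  rw [h2]
  rw [dotp_add_left, dotp_smul_left, dotp_smul_left] at h2
  nlinarith

theorem dual_extreme_isLP {P : Set (Fin d → ℝ)} (hP : IsLatticePolytope (dualPolytope P))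
    {a : Fin d → ℝ} (ha : a ∈ Set.extremePoints ℝ (dualPolytope P)) : IsLP a := by
  obtain ⟨T, hT, hTe⟩ := hP
  rw [hTe] at ha
  exact hT a (by simpa using extremePoints_convexHull_subset ha)

theorem dotp_int {a x : Fin d → ℝ} (ha : IsLP a) (hx : IsLP x) : ∃ n : ℤ, dotp a x = n := by
  choose f hf using ha
  choose g hg using hx
  exact ⟨∑ i, f i * g i, by simp [dotp, hf, hg]⟩

/-- The face cut out by a functional that is at most one is extreme. -/
theorem face_extreme {P : Set (Fin d → ℝ)} {u : (Fin d → ℝ) →ₗ[ℝ] ℝ} (h : ∀ y ∈ P, u y ≤ 1) :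
    IsExtreme ℝ P {y ∈ P | u y = 1} := by
  refine ⟨fun y hy => hy.1, ?_⟩
  rintro x hx y hy z ⟨_, hz⟩ ⟨s, t, hs, ht, hst, rfl⟩
  refine ⟨hx, ?_⟩
  have h1 := h x hx
  have h2 := h y hy
  simp only [map_add, map_smul, smul_eq_mul] at hz
  nlinarith

theorem facet_finrank {F : Set (Fin d → ℝ)} {u : (Fin d → ℝ) →ₗ[ℝ] ℝ} (hne : F.Nonempty)
    (h1 : ∀ y ∈ F, u y = 1) (hF : Submodule.span ℝ F = ⊤) :
    Module.finrank ℝ (vectorSpan ℝ F) = d - 1 := by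
  obtain ⟨p, hp⟩ := hne
  have hle : vectorSpan ℝ F ≤ LinearMap.ker u := by
    rw [vectorSpan_def, Submodule.span_le]
    rintro x ⟨y, hy, z, hz, rfl⟩
    simp [h1 y hy, h1 z hz]
  have htop : vectorSpan ℝ F ⊔ Submodule.span ℝ {p} = ⊤ := by
    rw [eq_top_iff, ← hF, Submodule.span_le]
    intro y hy
    have : y = (y -ᵥ p) + p := by simp
    rw [this]
    exact Submodule.add_mem_sup (vsub_mem_vectorSpan ℝ hy hp) (Submodule.mem_span_singleton_self p)
  have hdis : vectorSpan ℝ F ⊓ Submodule.span ℝ {p} = ⊥ := by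
    rw [eq_bot_iff]
    rintro x ⟨hx, hx2⟩
    obtain ⟨r, rfl⟩ := Submodule.mem_span_singleton.1 hx2
    have := hle hx
    rw [LinearMap.mem_ker, map_smul, h1 p hp, smul_eq_mul, mul_one] at this
    simp [this]
  have hp0 : p ≠ 0 := by
    rintro rfl
    have := h1 0 hp
    simp at this
  have := Submodule.finrank_sup_add_finrank_inf_eq (vectorSpan ℝ F) (Submodule.span ℝ {p})
  rw [htop, hdis, finrank_top, finrank_bot, finrank_span_singleton hp0] at this
  simp at this
  omega

theorem fac_of (hd : 3 ≤ d) {P : Set (Fin d → ℝ)} (hP : IsReflexive P) (hs : IsSimplicial P)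
    (hV : (V : Set (Fin d → ℝ)) = Set.extremePoints ℝ P)
    (hPV : P = convexHull ℝ (V : Set (Fin d → ℝ))) (u : (Fin d → ℝ) →ₗ[ℝ] ℝ)
    (hu : ∀ v ∈ V, u v ≤ 1) (hsp : Submodule.span ℝ {v | v ∈ V ∧ u v = 1} = ⊤) :
    (V.filter (fun v => u v = 1)).card = d ∧ ∀ x, IsLP x → ∃ n : ℤ, u x = n := by
  have huP : ∀ y ∈ P, u y ≤ 1 := by
    rw [hPV]; exact le_hull u hu
  have hVP : ∀ v ∈ V, v ∈ P := by
    intro v hv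
    have : v ∈ (V : Set (Fin d → ℝ)) := hv
    rw [hV] at this
    exact this.1
  have ha : coordVec u ∈ dualPolytope P := by
    intro y hy
    rw [dotp_coordVec]
    exact huP y hy
  constructor
  · have hsub : {v | v ∈ V ∧ u v = 1} ⊆ {y ∈ P | u y = 1} := fun v hv => ⟨hVP v hv.1, hv.2⟩
    have hF : Submodule.span ℝ {y ∈ P | u y = 1} = ⊤ := by
      rw [eq_top_iff, ← hsp]
      exact Submodule.span_mono hsub
    have hne : {y ∈ P | u y = 1}.Nonempty := by
      by_contra hcon
      rw [Set.not_nonempty_iff_eq_empty] at hcon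
      rw [hcon, Submodule.span_empty] at hF
      have h1 := congrArg (fun W : Submodule ℝ (Fin d → ℝ) => Module.finrank ℝ W) hF
      simp at h1
      omega
    have hfacet : IsFacet P {y ∈ P | u y = 1} := by
      refine ⟨coordVec u, hne, ha, ?_, facet_finrank hne (fun y hy => hy.2) hF⟩
      simp only [dotp_coordVec]
    have h1 := hs _ hfacet
    rw [(face_extreme huP).extremePoints_eq, ← hV] at h1
    refine Eq.trans ?_ h1
    rw [← Set.ncard_coe_finset]
    congr 1
    ext v
    simp only [Finset.coe_filter, Set.mem_setOf_eq, Set.mem_inter_iff, Finset.mem_coe]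
    exact ⟨fun h => ⟨⟨hVP v h.1, h.2⟩, h.1⟩, fun h => ⟨h.2, h.1.2⟩⟩
  · intro x hx
    have hLP := dual_extreme_isLP hP.2.2 (dual_extreme ha (fun v hv => hVP v hv.1) hsp
      (fun v hv => by rw [dotp_coordVec]; exact hv.2))
    obtain ⟨n, hn⟩ := dotp_int hLP hx
    exact ⟨n, by rw [← hn, dotp_coordVec]⟩

/-- The tight vertices at a vertex of the dual polytope span. -/
theorem span_of_extreme {P : Set (Fin d → ℝ)}
    (hPV : P = convexHull ℝ (V : Set (Fin d → ℝ))) {a : Fin d → ℝ}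
    (ha : a ∈ Set.extremePoints ℝ (dualPolytope P)) :
    Submodule.span ℝ {v | v ∈ V ∧ dotL a v = 1} = ⊤ := by
  by_contra hne
  obtain ⟨f, hf0, hf⟩ := Submodule.exists_le_ker_of_lt_top _ (lt_top_iff_ne_top.2 hne)
  have hfv : ∀ v ∈ V, dotL a v = 1 → f v = 0 := fun v hv h =>
    hf (Submodule.subset_span ⟨hv, h⟩)
  have haV : ∀ v ∈ V, dotL a v ≤ 1 := fun v hv =>
    ha.1 v (by rw [hPV]; exact subset_convexHull ℝ _ hv)
  have hε : ∃ ε : ℝ, 0 < ε ∧ ∀ v ∈ V, ε * |f v| ≤ 1 - dotL a v := by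
    have hev : ∀ᶠ t : ℝ in nhdsWithin 0 (Set.Ioi 0), ∀ v ∈ V, t * |f v| ≤ 1 - dotL a v := by
      rw [Filter.eventually_all_finset]
      intro v hv
      rcases eq_or_lt_of_le (haV v hv) with h | h
      · rw [hfv v hv h, h]
        simp
      · have hc : Continuous (fun t : ℝ => t * |f v|) := by fun_prop
        have : ∀ᶠ t : ℝ in nhds 0, t * |f v| < 1 - dotL a v :=
          hc.continuousAt.eventually_lt continuousAt_const (by simpa using h)
        exact (this.filter_mono nhdsWithin_le_nhds).mono fun t ht => ht.le
    obtain ⟨ε, h1, h2⟩ := (hev.and self_mem_nhdsWithin).exists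
    exact ⟨ε, h2, h1⟩
  obtain ⟨ε, hε, hεV⟩ := hε
  have hmem : ∀ s : ℝ, |s| = ε → a + s • coordVec f ∈ dualPolytope P := by
    intro s hs y hy
    rw [← dotL_apply]
    rw [hPV] at hy
    refine le_hull (dotL _) ?_ y hy
    intro v hv
    rw [dotL_apply, dotp_add_left, dotp_smul_left, dotp_coordVec, ← dotL_apply]
    have h1 := hεV v hv
    rw [← hs, ← abs_mul] at h1
    linarith [le_abs_self (s * f v)]
  have hp := hmem ε (abs_of_pos hε)
  have hm := hmem (-ε) (by rw [abs_neg, abs_of_pos hε])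
  have hmid := mid_open a (ε • coordVec f)
  rw [sub_eq_add_neg, ← neg_smul] at hmid
  have h := ((mem_extremePoints.1 ha).2 _ hp _ hm hmid).1
  have hz : coordVec f = 0 := by
    have : ε • coordVec f = 0 := by simpa using h
    rcases smul_eq_zero.1 this with h | h
    · linarith
    · exact h
  apply hf0
  ext1 i
  ext
  have := congrFun hz i
  simpa [coordVec] using this

/-- Every vertex lies on a facet. -/
theorem ex_of {P : Set (Fin d → ℝ)} (hP : IsReflexive P)
    (hPV : P = convexHull ℝ (V : Set (Fin d → ℝ))) {w : Fin d → ℝ} (hw0 : w ≠ 0)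
    (hw : w ∈ Set.extremePoints ℝ P) :
    ∃ u : (Fin d → ℝ) →ₗ[ℝ] ℝ, (∀ v ∈ V, u v ≤ 1) ∧
      Submodule.span ℝ {v | v ∈ V ∧ u v = 1} = ⊤ ∧ u w = 1 := by
  have hconv : Convex ℝ P := by rw [hPV]; exact convex_convexHull ℝ _
  have h0 := hP.2.1
  have hwi : w ∉ interior P := by
    intro hi
    have hc : Continuous (fun t : ℝ => w + t • w) := by fun_prop
    have hn : (fun t : ℝ => w + t • w) ⁻¹' P ∈ nhds (0 : ℝ) := by
      apply hc.continuousAt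
      simpa using mem_interior_iff_mem_nhds.1 hi
    obtain ⟨δ, hδ, hb⟩ := Metric.mem_nhds_iff.1 hn
    have h1 : w + (δ / 2) • w ∈ P := hb (by
      rw [Metric.mem_ball, Real.dist_eq, sub_zero, abs_of_pos (by positivity)]; linarith)
    have h2 : w - (δ / 2) • w ∈ P := by
      rw [sub_eq_add_neg, ← neg_smul]
      exact hb (by
        rw [Metric.mem_ball, Real.dist_eq, sub_zero, abs_neg, abs_of_pos (by positivity)]
        linarith)
    have h := ((mem_extremePoints.1 hw).2 _ h1 _ h2 (mid_open w ((δ / 2) • w))).1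
    have : (δ / 2) • w = 0 := by simpa using h
    rcases smul_eq_zero.1 this with h | h
    · linarith
    · exact hw0 h
  obtain ⟨f, hf⟩ := geometric_hahn_banach_open_point hconv.interior isOpen_interior hwi
  have hfw : 0 < f w := by simpa using hf 0 h0
  have hfP : ∀ y ∈ P, f y ≤ f w := by
    have hcl : closure (interior P) = closure P :=
      hconv.closure_interior_eq_closure_of_nonempty_interior ⟨0, h0⟩
    have hsub : closure (interior P) ⊆ {y | f y ≤ f w} :=
      closure_minimal (fun y hy => (hf y hy).le) (isClosed_le f.continuous continuous_const)
    intro y hy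
    exact hsub (by rw [hcl]; exact subset_closure hy)
  set g : (Fin d → ℝ) →ₗ[ℝ] ℝ := (f w)⁻¹ • f.toLinearMap with hg
  have hgx : ∀ x, g x = (f w)⁻¹ * f x := fun x => by simp [hg]
  have hlin : ∀ x, dotL w x = dotp x w := fun x => by rw [dotL_apply, dotp_comm]
  set D := dualPolytope P with hD
  have hface : IsExtreme ℝ D {x ∈ D | dotL w x = 1} := by
    apply face_extreme
    intro x hx
    rw [hlin]
    exact hx w hw.1
  obtain ⟨T, _, hT⟩ := hP.2.2
  have hDc : IsCompact D := by
    rw [hD, hT]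
    exact T.finite_toSet.isCompact_convexHull (𝕜 := ℝ)
  have hcomp : IsCompact {x ∈ D | dotL w x = 1} := by
    have : {x ∈ D | dotL w x = 1} = D ∩ {x | dotL w x = 1} := rfl
    rw [this]
    exact hDc.inter_right (isClosed_eq (LinearMap.continuous_of_finiteDimensional _)
      continuous_const)
  have hne : {x ∈ D | dotL w x = 1}.Nonempty := by
    refine ⟨coordVec g, ?_, ?_⟩
    · intro y hy
      rw [dotp_coordVec, hgx, inv_mul_le_iff₀ hfw, mul_one]
      exact hfP y hy
    · rw [hlin, dotp_coordVec, hgx, inv_mul_cancel₀ hfw.ne']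
  obtain ⟨a, ha⟩ := hcomp.extremePoints_nonempty hne
  have haD : a ∈ Set.extremePoints ℝ D := hface.extremePoints_subset_extremePoints ha
  refine ⟨dotL a, ?_, span_of_extreme hPV haD, ?_⟩
  · intro v hv
    exact haD.1 v (by rw [hPV]; exact subset_convexHull ℝ _ hv)
  · rw [dotL_apply, ← hlin]
    exact ha.1.2

theorem hull_of {P : Set (Fin d → ℝ)} (hP : IsLatticePolytope P)
    (hV : (V : Set (Fin d → ℝ)) = Set.extremePoints ℝ P) :
    P = convexHull ℝ (V : Set (Fin d → ℝ)) := by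
  obtain ⟨T, _, hT⟩ := hP
  have hc : IsCompact P := by
    rw [hT]
    exact T.finite_toSet.isCompact_convexHull (𝕜 := ℝ)
  have hconv : Convex ℝ P := by rw [hT]; exact convex_convexHull ℝ _
  have h := closure_convexHull_extremePoints hc hconv
  rw [← hV, (V.finite_toSet.isClosed_convexHull (𝕜 := ℝ)).closure_eq] at h
  exact h.symm

theorem hyp_of (hd : 3 ≤ d)
    (P : Set (Fin d → ℝ)) (hP : IsReflexive P) (hs : IsSimplicial P)
    (hcard : (Set.extremePoints ℝ P).ncard = 3 * d - 1)
    (hV : (V : Set (Fin d → ℝ)) = Set.extremePoints ℝ P)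
    (hnu : (∑ v ∈ V, v) ∈ Set.extremePoints ℝ P) : Hyp V := by
  have hPV := hull_of hP.1 hV
  have hz := zero_not_extreme hd hP.2.1
  have hmemV : ∀ v, v ∈ V ↔ v ∈ Set.extremePoints ℝ P := by
    intro v; rw [← hV]; rfl
  refine ⟨hd, ?_, fun h => hz ((hmemV _).1 h), fac_of hd hP hs hV hPV,
    neg_of_interior hP.2.1 hPV, ?_, (hmemV _).2 hnu, ex_of hP hPV ?_ hnu⟩
  · obtain ⟨T, hT, hTe⟩ := hP.1
    intro v hv
    have h1 := (hmemV v).1 hv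
    rw [hTe] at h1
    exact hT v (by simpa using extremePoints_convexHull_subset h1)
  · rw [← hcard, ← hV, Set.ncard_coe_finset]
  · intro h
    rw [h] at hnu
    exact hz hnu

end

/-- a `d ≥ 3`-dimensional simplicial reflexive polytope with `3d-1` vertices
such that `ν_P` is a vertex of `P` splits into `(d-2)/2` copies of `V₂` and one `Ṽ₂`
(`d` even), or into `(d-3)/2` copies of `V₂` and one `Q₃'` (`d` odd). -/
theorem stmt19 {d : ℕ} (hd : 3 ≤ d)
    (P : Set (Fin d → ℝ)) (hP : IsReflexive P) (hs : IsSimplicial P)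
    (hcard : (Set.extremePoints ℝ P).ncard = 3 * d - 1)
    (V : Finset (Fin d → ℝ)) (hV : (V : Set (Fin d → ℝ)) = Set.extremePoints ℝ P)
    (hnu : (∑ v ∈ V, v) ∈ Set.extremePoints ℝ P) :
    (Even d ∧ ∃ φ : (Fin d → ℝ) ≃ₗ[ℝ] (Fin d → ℝ), Unimodular φ ∧
        φ '' P = splitModel2 d tV2v) ∨
    (Odd d ∧ ∃ φ : (Fin d → ℝ) ≃ₗ[ℝ] (Fin d → ℝ), Unimodular φ ∧
        φ '' P = splitModel3 d Q3'v) := by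
  exact classify (hyp_of hd P hP hs hcard hV hnu) (hull_of hP.1 hV)
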